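/- arXiv:1808.06513 — 6 statements merged into one kernel-verified Lean document; each statement's English description precedes it below -/
import Mathlib

section
/- Let ℓ ≥ 2 be an integer and set q = 2ℓ+1. Then there exists an invertible linear map T_ℓ : Z^{2ℓ+1} → Z^{2ℓ+1}, written (u₁,…,u_{2ℓ+1}) ↦ (v₁,…,v_{2ℓ+1}), such that for all u₁,…,u_{2ℓ+1} ∈ Z one has P_{2ℓ+1}(u₁,…,u_{2ℓ+1}) = Σ_{k=1}^ℓ ((2ℓ+1)/(2k+1)) Q(v_{2k}, v_{2k+1}), where (v₁,…,v_{2ℓ+1}) = T_ℓ(u₁,…,u_{2ℓ+1}). -/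
/- `Z = ℝ^m`, `T = ℝ^ℓ`, `Q : Z × Z → T` bilinear skew-symmetric.
For `q ≥ 3`, `P_q(u₁,…,u_q) = Σ_{1≤j<k≤q} (q − 2(k−j)) Q(u_j,u_k)`
(here `u : Fin q → Z`, with `u i` playing the role of `u_{i+1}`). -/

noncomputable section

abbrev ZS (m : ℕ) := EuclideanSpace ℝ (Fin m)

abbrev TS (l : ℕ) := EuclideanSpace ℝ (Fin l)

/-- The map `P_q(u₁,…,u_q) = Σ_{1≤j<k≤q} (q − 2(k−j)) Q(u_j,u_k)`. -/
def Pfun {m l : ℕ} (Q : ZS m →ₗ[ℝ] ZS m →ₗ[ℝ] TS l) (q : ℕ)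
    (u : Fin q → ZS m) : TS l :=
  ∑ jk ∈ Finset.univ.filter (fun jk : Fin q × Fin q => jk.1 < jk.2),
    ((q : ℝ) - 2 * (((jk.2 : ℕ) : ℝ) - ((jk.1 : ℕ) : ℝ))) • Q (u jk.1) (u jk.2)

namespace PNF

variable {m l' : ℕ}

/-- off-diagonal coefficients -/
def cf (i j : ℕ) : ℝ :=
  if i = 0 then 0
  else if i % 2 = 1 then (2 * (j : ℝ) - (i : ℝ))
  else if j + 1 < i then -((2 * (j : ℝ) + 3 - (i : ℝ)) / ((i : ℝ) - 1)) else 0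

/-- diagonal coefficients -/
def cd (i : ℕ) : ℝ := if i % 2 = 1 then (i : ℝ) else 1

lemma cd_ne (i : ℕ) : cd i ≠ 0 := by
  unfold cd
  split_ifs with h
  · have : i ≠ 0 := by rintro rfl; simp at h
    exact_mod_cast this
  · exact one_ne_zero

/-- the new variables -/
def V (w : ℕ → ZS m) (i : ℕ) : ZS m := cd i • w i + ∑ j ∈ Finset.range i, cf i j • w j

/-- extension by zero -/
def ex {q : ℕ} (u : Fin q → ZS m) (i : ℕ) : ZS m := if h : i < q then u ⟨i, h⟩ else 0

/-- the linear map -/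
def L (q : ℕ) : (Fin q → ZS m) →ₗ[ℝ] (Fin q → ZS m) where
  toFun u i := V (ex u) i
  map_add' u v := by
    have : ∀ i, ex (u + v) i = ex u i + ex v i := by
      intro i; unfold ex; split_ifs <;> simp
    funext i
    simp only [V, this, smul_add, Finset.sum_add_distrib, Pi.add_apply]
    abel
  map_smul' c u := by
    have : ∀ i, ex (c • u) i = c • ex u i := by
      intro i; unfold ex; split_ifs <;> simp
    funext i
    simp only [V, this, smul_add, Pi.smul_apply, RingHom.id_apply, Finset.smul_sum,
      smul_comm c]

lemma L_inj (q : ℕ) : Function.Injective (L (m := m) q) := by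
  rw [← LinearMap.ker_eq_bot, LinearMap.ker_eq_bot']
  intro u hu
  have key : ∀ i, ex u i = 0 := by
    intro i
    induction i using Nat.strong_induction_on with
    | _ i ih =>
      by_cases h : i < q
      · have h1 : V (ex u) i = 0 := congrFun hu ⟨i, h⟩
        unfold V at h1
        rw [Finset.sum_eq_zero, add_zero] at h1
        · exact (smul_eq_zero.1 h1).resolve_left (cd_ne i)
        · intro j hj
          rw [ih j (Finset.mem_range.1 hj), smul_zero]
      · simp [ex, h]
  funext i
  have := key i
  simpa [ex] using this

/-- triangular sum -/
def F (Q : ZS m →ₗ[ℝ] ZS m →ₗ[ℝ] TS l') (n : ℕ) (c : ℕ → ℕ → ℝ) (w : ℕ → ZS m) : TS l' :=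
  ∑ k ∈ Finset.range n, ∑ j ∈ Finset.range k, c j k • Q (w j) (w k)

lemma Q_sum (Q : ZS m →ₗ[ℝ] ZS m →ₗ[ℝ] TS l') (hskew : ∀ z ζ : ZS m, Q z ζ = - Q ζ z)
    (n : ℕ) (a b : ℕ → ℝ) (w : ℕ → ZS m) :
    Q (∑ j ∈ Finset.range n, a j • w j) (∑ j ∈ Finset.range n, b j • w j) =
      F Q n (fun j k => a j * b k - a k * b j) w := by
  have hself : ∀ z, Q z z = 0 := by
    intro z
    have h : (2 : ℝ) • Q z z = 0 := by
      rw [two_smul]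
      exact eq_neg_iff_add_eq_zero.1 (hskew z z)
    exact (smul_eq_zero.1 h).resolve_left two_ne_zero
  induction n with
  | zero => simp [F]
  | succ n ih =>
    unfold F at *
    rw [Finset.sum_range_succ, Finset.sum_range_succ, Finset.sum_range_succ, ← ih]
    simp only [map_add, LinearMap.add_apply, map_smul, LinearMap.smul_apply, hself, map_sum,
      LinearMap.sum_apply, smul_zero, add_zero, sub_smul, Finset.sum_sub_distrib, mul_smul,
      Finset.smul_sum, smul_add, Finset.sum_add_distrib]
    rw [sub_eq_add_neg, ← Finset.sum_neg_distrib, add_assoc]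
    congr 1
    rw [add_comm]
    congr 1
    · refine Finset.sum_congr rfl fun j _ => ?_
      rw [smul_comm]
    · refine Finset.sum_congr rfl fun j _ => ?_
      rw [hskew (w n) (w j)]
      rw [smul_neg, smul_neg, smul_comm]

lemma step (Q : ZS m →ₗ[ℝ] ZS m →ₗ[ℝ] TS l') (hskew : ∀ z ζ : ZS m, Q z ζ = - Q ζ z)
    (l : ℕ) (w : ℕ → ZS m) :
    F Q (2 * l + 3) (fun j k => (2 * l + 3 : ℝ) - 2 * ((k : ℝ) - j)) w =
      ((2 * l + 3 : ℝ) / (2 * l + 1)) •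
        F Q (2 * l + 1) (fun j k => (2 * l + 1 : ℝ) - 2 * ((k : ℝ) - j)) w +
      Q (V w (2 * l + 1)) (V w (2 * l + 2)) := by
  have hp : (2 * l + 1 : ℝ) ≠ 0 := by positivity
  have hV1 : V w (2 * l + 1) = (2 * l + 1 : ℝ) • w (2 * l + 1) +
      ∑ j ∈ Finset.range (2 * l + 1), (2 * (j : ℝ) - (2 * l + 1)) • w j := by
    unfold V cd cf
    have : (2 * l + 1) % 2 = 1 := by omega
    simp [this]
  have hV2 : V w (2 * l + 2) = w (2 * l + 2) +
      ∑ j ∈ Finset.range (2 * l + 1),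
        (-((2 * (j : ℝ) + 1 - 2 * l) / (2 * l + 1))) • w j := by
    unfold V cd
    have : (2 * l + 2) % 2 ≠ 1 := by omega
    rw [Finset.sum_range_succ, if_neg this, one_smul]
    have h0 : cf (2 * l + 2) (2 * l + 1) = 0 := by
      unfold cf
      simp
    rw [h0, zero_smul, add_zero]
    congr 1
    refine Finset.sum_congr rfl fun j hj => ?_
    have hj' := Finset.mem_range.1 hj
    congr 1
    unfold cf
    rw [if_neg (by omega), if_neg this, if_pos (by omega)]
    push_cast
    congr 2 <;> ring
  rw [hV1, hV2]
  simp only [map_add, LinearMap.add_apply]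
  rw [Q_sum Q hskew]
  unfold F
  rw [Finset.sum_range_succ, Finset.sum_range_succ, Finset.sum_range_succ _ (2 * l + 1)]
  have hA : ∑ k ∈ Finset.range (2 * l + 1), ∑ j ∈ Finset.range k,
      ((2 * l + 3 : ℝ) - 2 * ((k : ℝ) - j)) • Q (w j) (w k) =
      ((2 * l + 3 : ℝ) / (2 * l + 1)) • (∑ k ∈ Finset.range (2 * l + 1), ∑ j ∈ Finset.range k,
      ((2 * l + 1 : ℝ) - 2 * ((k : ℝ) - j)) • Q (w j) (w k)) +
      ∑ k ∈ Finset.range (2 * l + 1), ∑ j ∈ Finset.range k,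
      ((2 * (j : ℝ) - (2 * l + 1)) * (-((2 * (k : ℝ) + 1 - 2 * l) / (2 * l + 1))) -
       (2 * (k : ℝ) - (2 * l + 1)) * (-((2 * (j : ℝ) + 1 - 2 * l) / (2 * l + 1)))) •
        Q (w j) (w k) := by
    simp only [Finset.smul_sum, ← Finset.sum_add_distrib, smul_smul, ← add_smul]
    refine Finset.sum_congr rfl fun k _ => Finset.sum_congr rfl fun j _ => ?_
    congr 1
    field_simp
    ring
  have hB : ∑ j ∈ Finset.range (2 * l + 1),
      ((2 * l + 3 : ℝ) - 2 * (((2 * l + 1 : ℕ) : ℝ) - j)) • Q (w j) (w (2 * l + 1)) =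
      Q ((2 * l + 1 : ℝ) • w (2 * l + 1)) (∑ j ∈ Finset.range (2 * l + 1),
        (-((2 * (j : ℝ) + 1 - 2 * l) / (2 * l + 1))) • w j) := by
    simp only [map_sum, map_smul, LinearMap.smul_apply, smul_smul]
    refine Finset.sum_congr rfl fun j _ => ?_
    rw [hskew (w (2 * l + 1)) (w j), smul_neg, ← neg_smul]
    congr 1
    push_cast
    field_simp
    ring
  have hC : ∑ j ∈ Finset.range (2 * l + 1),
      ((2 * l + 3 : ℝ) - 2 * (((2 * l + 2 : ℕ) : ℝ) - j)) • Q (w j) (w (2 * l + 2)) =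
      Q (∑ j ∈ Finset.range (2 * l + 1), (2 * (j : ℝ) - (2 * l + 1)) • w j) (w (2 * l + 2)) := by
    simp only [map_sum, map_smul, LinearMap.smul_apply, LinearMap.sum_apply]
    refine Finset.sum_congr rfl fun j _ => ?_
    congr 1
    push_cast
    ring
  have hD : ((2 * l + 3 : ℝ) - 2 * (((2 * l + 2 : ℕ) : ℝ) - ((2 * l + 1 : ℕ) : ℝ))) •
      Q (w (2 * l + 1)) (w (2 * l + 2)) =
      Q ((2 * l + 1 : ℝ) • w (2 * l + 1)) (w (2 * l + 2)) := by
    simp only [map_smul, LinearMap.smul_apply]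
    congr 1
    push_cast
    ring
  beta_reduce
  rw [hA, hB, hC, hD]
  abel

lemma main (Q : ZS m →ₗ[ℝ] ZS m →ₗ[ℝ] TS l') (hskew : ∀ z ζ : ZS m, Q z ζ = - Q ζ z)
    (l : ℕ) (w : ℕ → ZS m) :
    F Q (2 * l + 1) (fun j k => (2 * l + 1 : ℝ) - 2 * ((k : ℝ) - j)) w =
      ∑ k ∈ Finset.range l, ((2 * (l : ℝ) + 1) / (2 * (k : ℝ) + 3)) •
        Q (V w (2 * k + 1)) (V w (2 * k + 2)) := by
  induction l with
  | zero => simp [F]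
  | succ l ih =>
    have hs := step Q hskew l w
    have e : (2 * ((l + 1 : ℕ) : ℝ) + 1) = 2 * l + 3 := by push_cast; ring
    rw [e, show 2 * (l + 1) + 1 = 2 * l + 3 by ring, hs, ih, Finset.sum_range_succ,
      Finset.smul_sum]
    have hp : (2 * l + 1 : ℝ) ≠ 0 := by positivity
    have hp3 : (2 * l + 3 : ℝ) ≠ 0 := by positivity
    rw [div_self hp3, one_smul]
    congr 1
    refine Finset.sum_congr rfl fun k _ => ?_
    rw [smul_smul]
    congr 1
    field_simp

lemma Pfun_eq (Q : ZS m →ₗ[ℝ] ZS m →ₗ[ℝ] TS l') (q : ℕ) (u : Fin q → ZS m) :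
    Pfun Q q u = F Q q (fun j k => (q : ℝ) - 2 * ((k : ℝ) - j)) (ex u) := by
  unfold Pfun F
  have hex : ∀ i : Fin q, u i = ex u i := fun i => by simp [ex]
  simp only [hex]
  rw [Finset.sum_filter, Fintype.sum_prod_type_right,
    ← Fin.sum_univ_eq_sum_range (fun k => ∑ j ∈ Finset.range k,
      ((q : ℝ) - 2 * ((k : ℝ) - j)) • Q (ex u j) (ex u k)) q]
  refine Finset.sum_congr rfl fun k _ => ?_
  have := Fin.sum_univ_eq_sum_range (fun j => if j < (k : ℕ) then
      ((q : ℝ) - 2 * (((k : ℕ) : ℝ) - j)) • Q (ex u j) (ex u k) else 0) q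
  simp only [Fin.lt_def]
  rw [this, ← Finset.sum_filter]
  refine Finset.sum_congr ?_ fun _ _ => rfl
  ext j
  have := k.isLt
  simp only [Finset.mem_filter, Finset.mem_range]
  omega

end PNF

/-- **Normal form of `P_{2ℓ+1}`:** there is an invertible linear change of variable
`(u₁,…,u_{2ℓ+1}) ↦ (v₁,…,v_{2ℓ+1})` such that
`P_{2ℓ+1}(u) = Σ_{k=1}^ℓ ((2ℓ+1)/(2k+1)) Q(v_{2k}, v_{2k+1})`. -/
theorem P_odd_normal_form
    (m l' : ℕ) (hm : 0 < m) (hl' : 0 < l')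
    (Q : ZS m →ₗ[ℝ] ZS m →ₗ[ℝ] TS l')
    (hskew : ∀ z ζ : ZS m, Q z ζ = - Q ζ z)
    (l : ℕ) (hl : 2 ≤ l) :
    ∃ T : (Fin (2 * l + 1) → ZS m) ≃ₗ[ℝ] (Fin (2 * l + 1) → ZS m),
      ∀ u : Fin (2 * l + 1) → ZS m,
        Pfun Q (2 * l + 1) u =
          ∑ k : Fin l,
            ((2 * (l : ℝ) + 1) / (2 * ((k : ℕ) : ℝ) + 3)) •
              Q (T u ⟨2 * (k : ℕ) + 1, by have := k.isLt; omega⟩)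
                (T u ⟨2 * (k : ℕ) + 2, by have := k.isLt; omega⟩) := by
  refine ⟨LinearEquiv.ofInjectiveEndo (PNF.L (2 * l + 1)) (PNF.L_inj _), fun u => ?_⟩
  rw [PNF.Pfun_eq]
  have h := PNF.main Q hskew l (PNF.ex u)
  rw [← Fin.sum_univ_eq_sum_range (fun k => ((2 * (l : ℝ) + 1) / (2 * (k : ℝ) + 3)) •
        Q (PNF.V (PNF.ex u) (2 * k + 1)) (PNF.V (PNF.ex u) (2 * k + 2))) l] at h
  push_cast
  exact h
end
end

section
/- Let q ≥ 5 be an odd integer. For u₁,…,u_q ∈ Z define v_{q−1} = Σ_{j=1}^{q−1} (2j−q) u_j and v_q = u_q − Σ_{j=1}^{q−2} ((−q+2+2j)/(q−2)) u_j. Then the identity P_q(u₁,…,u_q) = Q(v_{q−1}, v_q) + (q/(q−2)) P_{q−2}(u₁,…,u_{q−2}) holds for all u₁,…,u_q ∈ Z. -/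
/- `Z = ℝ^m`, `T = ℝ^ℓ`, `Q : Z × Z → T` bilinear skew-symmetric.
For `q ≥ 3`, `P_q(u₁,…,u_q) = Σ_{1≤j<k≤q} (q − 2(k−j)) Q(u_j,u_k)`
(here `u : Fin q → Z`, with `u i` playing the role of `u_{i+1}`). -/

noncomputable section

theorem aux_wedge {m l : ℕ} (Q : ZS m →ₗ[ℝ] ZS m →ₗ[ℝ] TS l)
    (hskew : ∀ z ζ : ZS m, Q z ζ = - Q ζ z) (w : ℕ → ZS m) (a b : ℕ → ℝ) (n : ℕ) :
    Q (∑ j ∈ Finset.range n, a j • w j) (∑ j ∈ Finset.range n, b j • w j) =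
      ∑ k ∈ Finset.range n, ∑ j ∈ Finset.range k, (a j * b k - a k * b j) • Q (w j) (w k) := by
  induction n with
  | zero => simp
  | succ n ih =>
    have h0 : Q (w n) (w n) = 0 := by
      have h := hskew (w n) (w n)
      have h2 : (2 : ℝ) • Q (w n) (w n) = 0 := by
        rw [two_smul]; nth_rewrite 1 [h]; exact neg_add_cancel _
      exact (smul_eq_zero.mp h2).resolve_left two_ne_zero
    rw [Finset.sum_range_succ, Finset.sum_range_succ (fun j => b j • w j), Finset.sum_range_succ _ n,
      ← ih]
    simp only [map_add, LinearMap.add_apply, map_smul, LinearMap.smul_apply, h0, smul_zero,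
      add_zero, map_sum, LinearMap.sum_apply, sub_smul, Finset.sum_sub_distrib,
      smul_add, Finset.sum_add_distrib]
    rw [add_assoc]
    congr 1
    rw [add_comm, Finset.smul_sum, sub_eq_add_neg, ← Finset.sum_neg_distrib]
    congr 1
    · refine Finset.sum_congr rfl fun j _ => ?_
      rw [smul_smul, mul_comm]
    · refine Finset.sum_congr rfl fun j _ => ?_
      rw [hskew (w n), smul_neg, smul_neg, smul_smul, mul_comm]

theorem aux_P {m l : ℕ} (Q : ZS m →ₗ[ℝ] ZS m →ₗ[ℝ] TS l) (q : ℕ) (w : ℕ → ZS m) :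
    Pfun Q q (fun j => w j) = ∑ k ∈ Finset.range q, ∑ j ∈ Finset.range k,
      ((q : ℝ) - 2 * ((k : ℝ) - (j : ℝ))) • Q (w j) (w k) := by
  unfold Pfun
  rw [Finset.sum_sigma']
  refine Finset.sum_bij (fun (p : Fin q × Fin q) _ => (⟨(p.2 : ℕ), (p.1 : ℕ)⟩ : (_ : ℕ) × ℕ))
    ?_ ?_ ?_ ?_
  · rintro ⟨a, b⟩ h
    simpa using h
  · rintro ⟨a, b⟩ _ ⟨c, d⟩ _ h
    simp only [Sigma.mk.injEq, heq_eq_eq] at h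
    ext <;> simp [h.1, h.2]
  · rintro ⟨k, j⟩ h
    simp only [Finset.mem_sigma, Finset.mem_range] at h
    exact ⟨(⟨j, by omega⟩, ⟨k, h.1⟩), by simpa using h.2, rfl⟩
  · rintro ⟨a, b⟩ _
    rfl

theorem aux_main {m l : ℕ} (Q : ZS m →ₗ[ℝ] ZS m →ₗ[ℝ] TS l)
    (hskew : ∀ z ζ : ZS m, Q z ζ = - Q ζ z) (w : ℕ → ZS m) (n : ℕ) (hn : 0 < n) (r : ℝ)
    (hr : r = n + 2) :
    ∑ k ∈ Finset.range (n + 2), ∑ j ∈ Finset.range k,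
      (r - 2 * ((k : ℝ) - (j : ℝ))) • Q (w j) (w k) =
    Q (∑ j ∈ Finset.range (n + 1), (2 * ((j : ℝ) + 1) - r) • w j)
      (w (n + 1) - ∑ j ∈ Finset.range n, ((-r + 2 + 2 * ((j : ℝ) + 1)) / (r - 2)) • w j)
    + (r / (r - 2)) • ∑ k ∈ Finset.range n, ∑ j ∈ Finset.range k,
      ((n : ℝ) - 2 * ((k : ℝ) - (j : ℝ))) • Q (w j) (w k) := by
  have hn0 : (n : ℝ) ≠ 0 := by positivity
  have hr2 : r - 2 = n := by rw [hr]; ring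
  have e1 : ∑ k ∈ Finset.range n, ∑ j ∈ Finset.range k,
      (r - 2 * ((k : ℝ) - (j : ℝ))) • Q (w j) (w k) =
      (r / (r - 2)) • (∑ k ∈ Finset.range n, ∑ j ∈ Finset.range k,
        ((n : ℝ) - 2 * ((k : ℝ) - (j : ℝ))) • Q (w j) (w k)) -
      Q (∑ j ∈ Finset.range n, (2 * ((j : ℝ) + 1) - r) • w j)
        (∑ j ∈ Finset.range n, ((-r + 2 + 2 * ((j : ℝ) + 1)) / (r - 2)) • w j) := by
    rw [aux_wedge Q hskew w (fun j => 2 * ((j : ℝ) + 1) - r)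
      (fun j => (-r + 2 + 2 * ((j : ℝ) + 1)) / (r - 2)), Finset.smul_sum, ← Finset.sum_sub_distrib]
    refine Finset.sum_congr rfl fun k _ => ?_
    rw [Finset.smul_sum, ← Finset.sum_sub_distrib]
    refine Finset.sum_congr rfl fun j _ => ?_
    rw [smul_smul, ← sub_smul]
    congr 1
    rw [hr2, hr]
    field_simp
    ring
  have e2 : ∑ j ∈ Finset.range n, (r - 2 * ((n : ℝ) - (j : ℝ))) • Q (w j) (w n) =
      - Q ((2 * ((n : ℝ) + 1) - r) • w n)
        (∑ j ∈ Finset.range n, ((-r + 2 + 2 * ((j : ℝ) + 1)) / (r - 2)) • w j) := by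
    rw [← hskew]
    simp only [map_sum, LinearMap.sum_apply, map_smul, LinearMap.smul_apply, Finset.smul_sum, smul_smul]
    refine Finset.sum_congr rfl fun j _ => ?_
    congr 1
    rw [hr2, hr]
    field_simp
    ring
  have e3 : ∑ j ∈ Finset.range (n + 1), (r - 2 * (((n + 1 : ℕ) : ℝ) - (j : ℝ))) • Q (w j) (w (n + 1)) =
      Q (∑ j ∈ Finset.range (n + 1), (2 * ((j : ℝ) + 1) - r) • w j) (w (n + 1)) := by
    simp only [map_sum, LinearMap.sum_apply, map_smul, LinearMap.smul_apply]
    refine Finset.sum_congr rfl fun j _ => ?_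
    congr 1
    rw [hr]
    push_cast
    ring
  rw [Finset.sum_range_succ, Finset.sum_range_succ _ n, e1, e2, e3, map_sub,
    Finset.sum_range_succ (fun j : ℕ => (2 * ((j : ℝ) + 1) - r) • w j) n]
  simp only [map_add, LinearMap.add_apply]
  abel

/-- **Recursive identity for `P_q`, `q ≥ 5` odd:** with
`v_{q−1} = Σ_{j=1}^{q−1} (2j−q) u_j` and
`v_q = u_q − Σ_{j=1}^{q−2} ((−q+2+2j)/(q−2)) u_j` one has
`P_q(u) = Q(v_{q−1}, v_q) + (q/(q−2)) P_{q−2}(u₁,…,u_{q−2})`. -/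
theorem P_recursive_identity
    (m l : ℕ) (hm : 0 < m) (hl : 0 < l)
    (Q : ZS m →ₗ[ℝ] ZS m →ₗ[ℝ] TS l)
    (hskew : ∀ z ζ : ZS m, Q z ζ = - Q ζ z)
    (q : ℕ) (hq : 5 ≤ q) (hodd : Odd q)
    (u : Fin q → ZS m) :
    Pfun Q q u =
      Q (∑ j : Fin (q - 1),
          (2 * (((j : ℕ) : ℝ) + 1) - (q : ℝ)) • u (Fin.castLE (by omega) j))
        (u ⟨q - 1, by omega⟩ -
          ∑ j : Fin (q - 2),
            ((-(q : ℝ) + 2 + 2 * (((j : ℕ) : ℝ) + 1)) / ((q : ℝ) - 2)) •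
              u (Fin.castLE (by omega) j))
      + ((q : ℝ) / ((q : ℝ) - 2)) •
          Pfun Q (q - 2) (fun j => u (Fin.castLE (by omega) j)) := by
  obtain ⟨n, rfl⟩ : ∃ n, q = n + 2 := ⟨q - 2, by omega⟩
  obtain ⟨w, rfl⟩ : ∃ w : ℕ → ZS m, u = fun j : Fin (n + 2) => w (j : ℕ) :=
    ⟨fun j => if h : j < n + 2 then u ⟨j, h⟩ else 0, by funext j; simp⟩
  have key := aux_main Q hskew w n (by omega) ((n + 2 : ℕ) : ℝ) (by push_cast; ring)
  rw [← aux_P, ← aux_P, Finset.sum_range, Finset.sum_range] at key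
  exact key
end
end

section
/- Let E ⊆ G be precisely monotone and let P ∈ ∂E. Then for every pair of linearly independent vectors u, v ∈ Z there exists a nonzero vector w in the span of {u,v} such that the whole horizontal line {P·(sw,0) : s ∈ ℝ} is contained in ∂E. -/
/- Step-two Carnot group `G = Z × T` with `Z = ℝ^m`, `T = ℝ^ℓ` and group law
`(z,t)·(ζ,τ) = (z+ζ, t+τ+Q(z,ζ))` for a bilinear skew-symmetric `Q`. -/

noncomputable section

/-- Group law of the step-two group. -/
def gmul {m l : ℕ} (Q : ZS m →ₗ[ℝ] ZS m →ₗ[ℝ] TS l)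
    (p q : ZS m × TS l) : ZS m × TS l :=
  (p.1 + q.1, p.2 + q.2 + Q p.1 q.1)

/-- Horizontal convexity. -/
def HConvex {m l : ℕ} (Q : ZS m →ₗ[ℝ] ZS m →ₗ[ℝ] TS l)
    (C : Set (ZS m × TS l)) : Prop :=
  ∀ p : ZS m × TS l, ∀ u : ZS m, p ∈ C → gmul Q p (u, 0) ∈ C →
    ∀ s : ℝ, 0 ≤ s → s ≤ 1 → gmul Q p (s • u, 0) ∈ C

theorem aux_between {m l : ℕ} (Q : ZS m →ₗ[ℝ] ZS m →ₗ[ℝ] TS l)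
    (hskew : ∀ z ζ : ZS m, Q z ζ = - Q ζ z)
    (C : Set (ZS m × TS l)) (hC : HConvex Q C) (X : ZS m × TS l) (w : ZS m)
    (a b c : ℝ) (hab : a ≤ b) (hbc : b ≤ c)
    (ha : gmul Q X (a • w, 0) ∈ C) (hc : gmul Q X (c • w, 0) ∈ C) :
    gmul Q X (b • w, 0) ∈ C := by
  have hww : Q w w = 0 := by
    have h := hskew w w
    have h2 : (2 : ℝ) • Q w w = 0 := by
      rw [two_smul]
      nth_rewrite 1 [h]
      exact neg_add_cancel _
    exact (smul_eq_zero.mp h2).resolve_left two_ne_zero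
  have key : ∀ r s : ℝ, gmul Q (gmul Q X (r • w, 0)) (s • w, 0) = gmul Q X ((r + s) • w, 0) := by
    intro r s
    simp only [gmul, map_add, map_smul, LinearMap.add_apply, LinearMap.smul_apply, hww]
    ext1
    · simp only; module
    · simp only; module
  rcases eq_or_lt_of_le (hab.trans hbc) with h | h
  · have : b = a := by linarith
    rwa [this]
  · have h0 : 0 < c - a := by linarith
    have := hC (gmul Q X (a • w, 0)) ((c - a) • w) ha
      (by rw [key]; simpa using hc) ((b - a) / (c - a)) (by apply div_nonneg <;> linarith)
      (by rw [div_le_one h0]; linarith)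
    rw [smul_smul, div_mul_cancel₀ _ h0.ne', key] at this
    simpa using this

theorem aux_cont {m l : ℕ} (Q : ZS m →ₗ[ℝ] ZS m →ₗ[ℝ] TS l) (w : ZS m) :
    Continuous fun X : ZS m × TS l => gmul Q X (w, 0) := by
  have h : Continuous (Q.flip w) := LinearMap.continuous_of_finiteDimensional _
  have h2 : Continuous fun X : ZS m × TS l => Q.flip w X.1 := h.comp continuous_fst
  simp only [LinearMap.flip_apply] at h2
  unfold gmul
  exact (continuous_fst.add continuous_const).prodMk
    ((continuous_snd.add continuous_const).add h2)

theorem aux_cont2 {m l : ℕ} (Q : ZS m →ₗ[ℝ] ZS m →ₗ[ℝ] TS l) (X : ZS m × TS l) :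
    Continuous fun w : ZS m => gmul Q X (w, 0) := by
  have h : Continuous (Q X.1) := LinearMap.continuous_of_finiteDimensional _
  unfold gmul
  fun_prop

theorem aux_near {m l : ℕ} (Q : ZS m →ₗ[ℝ] ZS m →ₗ[ℝ] TS l)
    (S A B : Set (ZS m × TS l)) (P : ZS m × TS l) (hP : P ∈ closure S) (x y : ZS m)
    (hx : gmul Q P (x, 0) ∈ interior A) (hy : gmul Q P (y, 0) ∈ interior B) :
    ∃ X ∈ S, gmul Q X (x, 0) ∈ A ∧ gmul Q X (y, 0) ∈ B := by
  have hO := (isOpen_interior.preimage (aux_cont Q x) (t := interior A)).inter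
    (isOpen_interior.preimage (aux_cont Q y) (t := interior B))
  obtain ⟨X, hX, hXS⟩ := mem_closure_iff.mp hP _ hO ⟨hx, hy⟩
  exact ⟨X, hXS, interior_subset hX.1, interior_subset hX.2⟩

theorem aux_zero {m l : ℕ} (Q : ZS m →ₗ[ℝ] ZS m →ₗ[ℝ] TS l) (X : ZS m × TS l) (w : ZS m) :
    gmul Q X ((0 : ℝ) • w, 0) = X := by
  simp [gmul]

/-- Opposite rays cannot both meet the interior. -/
theorem aux_opp {m l : ℕ} (Q : ZS m →ₗ[ℝ] ZS m →ₗ[ℝ] TS l)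
    (hskew : ∀ z ζ : ZS m, Q z ζ = - Q ζ z)
    (E : Set (ZS m × TS l)) (hE : HConvex Q E)
    (P : ZS m × TS l) (hP : P ∈ closure Eᶜ) (w : ZS m) (s t : ℝ) (hs : 0 < s) (ht : t < 0)
    (h1 : gmul Q P (s • w, 0) ∈ interior E) (h2 : gmul Q P (t • w, 0) ∈ interior E) : False := by
  obtain ⟨X, hX, ha, hb⟩ := aux_near Q _ _ _ P hP _ _ h1 h2
  have := aux_between Q hskew E hE X w t 0 s ht.le hs.le hb ha
  rw [aux_zero] at this
  exact hX this

theorem aux_ray {m l : ℕ} (Q : ZS m →ₗ[ℝ] ZS m →ₗ[ℝ] TS l)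
    (hskew : ∀ z ζ : ZS m, Q z ζ = - Q ζ z)
    (E : Set (ZS m × TS l)) (hE : HConvex Q E) (hE' : HConvex Q Eᶜ)
    (P : ZS m × TS l) (hP : P ∈ closure E) (hP' : P ∈ closure Eᶜ) (w : ZS m) (s t : ℝ)
    (hs : 0 < s) (ht : 0 < t)
    (h1 : gmul Q P (s • w, 0) ∈ interior E) (h2 : gmul Q P (t • w, 0) ∈ interior Eᶜ) : False := by
  rcases le_total s t with h | h
  · obtain ⟨X, hX, ha, hb⟩ := aux_near Q _ _ _ P hP' _ _ h1 h2
    rw [← aux_zero Q X w] at hX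
    exact aux_between Q hskew _ hE' X w 0 s t hs.le h hX hb ha
  · obtain ⟨X, hX, ha, hb⟩ := aux_near Q _ _ _ P hP _ _ h1 h2
    rw [← aux_zero Q X w] at hX
    exact hb (aux_between Q hskew _ hE X w 0 t s ht.le h hX ha)

theorem line_in_boundary_in_plane
    (m l : ℕ) (hm : 0 < m) (hl : 0 < l)
    (Q : ZS m →ₗ[ℝ] ZS m →ₗ[ℝ] TS l)
    (hskew : ∀ z ζ : ZS m, Q z ζ = - Q ζ z)
    (E : Set (ZS m × TS l)) (hE : HConvex Q E ∧ HConvex Q Eᶜ)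
    (P : ZS m × TS l) (hP : P ∈ frontier E)
    (u v : ZS m) (huv : LinearIndependent ℝ ![u, v]) :
    ∃ w : ZS m, w ≠ 0 ∧ w ∈ Submodule.span ℝ ({u, v} : Set (ZS m)) ∧
      ∀ s : ℝ, gmul Q P (s • w, 0) ∈ frontier E := by
  have hfr : ∀ X, X ∉ frontier E → X ∈ interior E ∨ X ∈ interior Eᶜ := by
    intro X hX
    rw [interior_compl]
    by_contra! h
    exact hX ⟨not_not.mp h.2, h.1⟩
  have hPc : P ∈ closure E := hP.1
  have hPc' : P ∈ closure Eᶜ := by rw [closure_compl]; exact hP.2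
  by_contra! hcon
  let w : ℝ → ZS m := fun θ => Real.cos θ • u + Real.sin θ • v
  have hwc : Continuous w := by fun_prop
  have hwpi : ∀ θ, w (θ + Real.pi) = - w θ := by
    intro θ
    simp only [w, Real.cos_add_pi, Real.sin_add_pi]
    module
  have hw0 : ∀ θ, w θ ≠ 0 := by
    intro θ h
    have := LinearIndependent.pair_iff.mp huv _ _ h
    have h3 := Real.sin_sq_add_cos_sq θ
    rw [this.1, this.2] at h3
    norm_num at h3
  have hwm : ∀ θ, w θ ∈ Submodule.span ℝ ({u, v} : Set (ZS m)) := fun θ =>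
    Submodule.mem_span_pair.mpr ⟨_, _, rfl⟩
  let O : Set ℝ → Set (ZS m × TS l) → Set ℝ := fun R A =>
    {θ | ∃ s ∈ R, gmul Q P (s • w θ, 0) ∈ interior A}
  have hO : ∀ R A, IsOpen (O R A) := by
    intro R A
    have : O R A = ⋃ s ∈ R, {θ | gmul Q P (s • w θ, 0) ∈ interior A} := by
      ext θ; simp [O]
    rw [this]
    refine isOpen_biUnion fun s _ => isOpen_interior.preimage ?_
    exact (aux_cont2 Q P).comp (hwc.const_smul s)
  let U := O (Set.Ioi 0) E ∪ O (Set.Iio 0) Eᶜ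
  let V := O (Set.Ioi 0) Eᶜ ∪ O (Set.Iio 0) E
  have hcov : ∀ θ, θ ∈ U ∪ V := by
    intro θ
    obtain ⟨s, hs⟩ := hcon (w θ) (hw0 θ) (hwm θ)
    have hs0 : s ≠ 0 := by
      rintro rfl
      rw [aux_zero] at hs
      exact hs hP
    rcases hfr _ hs with h | h <;> rcases lt_or_gt_of_ne hs0 with h' | h'
    · exact Or.inr (Or.inr ⟨s, h', h⟩)
    · exact Or.inl (Or.inl ⟨s, h', h⟩)
    · exact Or.inl (Or.inr ⟨s, h', h⟩)
    · exact Or.inr (Or.inl ⟨s, h', h⟩)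
  have hUV : ∀ θ, θ ∈ U → θ + Real.pi ∈ V := by
    rintro θ (⟨s, hs, h⟩ | ⟨s, hs, h⟩)
    · exact Or.inr ⟨-s, by simpa using hs, by rw [hwpi, neg_smul_neg]; exact h⟩
    · exact Or.inl ⟨-s, by simpa using hs, by rw [hwpi, neg_smul_neg]; exact h⟩
  have hVU : ∀ θ, θ ∈ V → θ + Real.pi ∈ U := by
    rintro θ (⟨s, hs, h⟩ | ⟨s, hs, h⟩)
    · exact Or.inr ⟨-s, by simpa using hs, by rw [hwpi, neg_smul_neg]; exact h⟩
    · exact Or.inl ⟨-s, by simpa using hs, by rw [hwpi, neg_smul_neg]; exact h⟩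
  have hne : U.Nonempty ∧ V.Nonempty := by
    rcases hcov 0 with h | h
    · exact ⟨⟨_, h⟩, ⟨_, hUV _ h⟩⟩
    · exact ⟨⟨_, hVU _ h⟩, ⟨_, h⟩⟩
  obtain ⟨θ, -, hθU, hθV⟩ := (isPreconnected_univ (α := ℝ)) U V
    ((hO _ _).union (hO _ _)) ((hO _ _).union (hO _ _)) (fun θ _ => hcov θ)
    (by simpa using hne.1) (by simpa using hne.2)
  rcases hθU with ⟨s, hs, h⟩ | ⟨s, hs, h⟩ <;> rcases hθV with ⟨t, ht, h'⟩ | ⟨t, ht, h'⟩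
  · exact aux_ray Q hskew E hE.1 hE.2 P hPc hPc' _ s t hs ht h h'
  · exact aux_opp Q hskew E hE.1 P hPc' _ s t hs ht h h'
  · exact aux_opp Q hskew Eᶜ hE.2 P (by rwa [compl_compl]) _ t s ht hs h' h
  · rw [← neg_smul_neg] at h h'
    exact aux_ray Q hskew E hE.1 hE.2 P hPc hPc' _ (-t) (-s) (by simpa using ht)
      (by simpa using hs) h' h
end
end

section
/- Let E ⊆ ℝ⁴ = ℍ×ℝ be precisely monotone. Then the interior of the boundary ∂E is empty; equivalently, the open set Int(E) ∪ Int(ℝ⁴∖E) is dense in ℝ⁴. -/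
/- The group `ℍ×ℝ`: `ℝ⁴` with coordinates `(x,y,u,t)` and law
`(x,y,u,t)·(x',y',u',t') = (x+x', y+y', u+u', t+t'+2(yx'−y'x))`. -/

noncomputable section

/-- Group law of `ℍ×ℝ` on `ℝ⁴`. -/
def hmul (p q : Fin 4 → ℝ) : Fin 4 → ℝ :=
  ![p 0 + q 0, p 1 + q 1, p 2 + q 2, p 3 + q 3 + 2 * (p 1 * q 0 - q 1 * p 0)]

/-- Horizontal convexity in `ℍ×ℝ`. -/
def HRConvex (C : Set (Fin 4 → ℝ)) : Prop :=
  ∀ p ∈ C, ∀ a b c : ℝ, hmul p ![a, b, c, 0] ∈ C →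
    ∀ s : ℝ, 0 ≤ s → s ≤ 1 → hmul p ![s * a, s * b, s * c, 0] ∈ C

/-- Precise monotonicity in `ℍ×ℝ`. -/
def PreciselyMonotone (E : Set (Fin 4 → ℝ)) : Prop := HRConvex E ∧ HRConvex Eᶜ

/-- Horizontal convexity in the first Heisenberg group. -/
def HC3 (F : Set (ℝ × ℝ × ℝ)) : Prop :=
  ∀ x y t a b s : ℝ, (x, y, t) ∈ F → (x + a, y + b, t + 2 * (y * a - b * x)) ∈ F →
    0 ≤ s → s ≤ 1 → (x + s * a, y + s * b, t + 2 * (s * (y * a - b * x))) ∈ F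

/-- The parametrization by lines through the first axis. -/
def pp (s m y : ℝ) : ℝ × ℝ × ℝ := (s + m * y, y, -2 * y * s)

/-- propagation along the transversal lines -/
lemma pp_up {F : Set (ℝ × ℝ × ℝ)} (hF : HC3 F) {s m y y' : ℝ} (h0 : (s, 0, 0) ∈ F)
    (hy : 0 < y) (hyy : y ≤ y') (h : pp s m y ∉ F) : pp s m y' ∉ F := by
  intro h'
  apply h
  have hy' : 0 < y' := by linarith
  have := hF s 0 0 (m * y') y' (y / y') h0
    (by convert h' using 1; simp only [pp, Prod.mk.injEq]; refine ⟨trivial, by ring, by ring⟩)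
    (by positivity) (by rw [div_le_one hy']; exact hyy)
  convert this using 1
  simp only [pp, Prod.mk.injEq]
  refine ⟨by field_simp, by field_simp; ring, by field_simp; ring⟩

/-- convexity along the lines in a slice `y = const` -/
lemma pp_slice {F : Set (ℝ × ℝ × ℝ)} (hF : HC3 F) {s m y h1 h2 : ℝ} (hy : 0 < y)
    (hh1 : h1 ≤ 0) (hh2 : 0 ≤ h2)
    (H1 : pp (s + h1) (m - 2 * h1 / y) y ∈ F) (H2 : pp (s + h2) (m - 2 * h2 / y) y ∈ F) :
    pp s m y ∈ F := by
  rcases eq_or_lt_of_le hh1 with rfl | hh1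
  · simpa using H1
  have hd : 0 < h2 - h1 := by linarith
  have := hF (s + h1 + (m - 2 * h1 / y) * y) y (-2 * y * (s + h1)) (-(h2 - h1)) 0
    (-h1 / (h2 - h1)) H1
    (by
      convert H2 using 1; simp only [pp, Prod.mk.injEq]
      refine ⟨by field_simp; ring, by ring, by ring⟩)
    (by apply div_nonneg <;> linarith) (by rw [div_le_one hd]; linarith)
  convert this using 1
  simp only [pp, Prod.mk.injEq]
  refine ⟨by field_simp; ring, by ring, by field_simp; ring⟩

/-- the triangle argument -/
lemma pp_tri {F : Set (ℝ × ℝ × ℝ)} (hF : HC3 F) (hF' : HC3 Fᶜ) {s m σ H yi yj y4 : ℝ}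
    (hσ : σ = 1 ∨ σ = -1) (hyi : 0 < yi) (hij : yi < yj) (hj4 : yj < y4)
    (hseg : ∀ h, 0 ≤ h → h ≤ H → (s + σ * h, 0, 0) ∈ F)
    (Hi : ∀ h, 0 ≤ h → h ≤ H → pp (s + σ * h) (m - 2 * (σ * h) / yi) yi ∉ F)
    (Hj : ∀ h, 0 ≤ h → h ≤ H → pp (s + σ * h) (m - 2 * (σ * h) / yj) yj ∉ F)
    {h k y : ℝ} (h0 : 0 < h) (hk1 : yj⁻¹ < k) (hk2 : k < yi⁻¹)
    (hH : h * (k - y4⁻¹) ≤ H * (yj⁻¹ - y4⁻¹)) (hy : y4 ≤ y) :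
    pp (s + σ * h) (m - 2 * σ * h * k) y ∉ F := by
  have hyj : 0 < yj := by linarith
  have hy4 : 0 < y4 := by linarith
  have e1 : y4⁻¹ < yj⁻¹ := inv_strictAnti₀ hyj hj4
  have e2 : yj⁻¹ < yi⁻¹ := inv_strictAnti₀ hyi hij
  have hjd : 0 < yj⁻¹ - y4⁻¹ := by linarith
  have hid : 0 < yi⁻¹ - y4⁻¹ := by linarith
  set a := h * (k - y4⁻¹) / (yi⁻¹ - y4⁻¹) with ha
  set b := h * (k - y4⁻¹) / (yj⁻¹ - y4⁻¹) with hb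
  have haE : a * (yi⁻¹ - y4⁻¹) = h * (k - y4⁻¹) := div_mul_cancel₀ _ hid.ne'
  have hbE : b * (yj⁻¹ - y4⁻¹) = h * (k - y4⁻¹) := div_mul_cancel₀ _ hjd.ne'
  have hhk : 0 < h * (k - y4⁻¹) := mul_pos h0 (by linarith)
  have ha0 : 0 < a := by positivity
  have hah : a ≤ h := by
    rw [ha, div_le_iff₀ hid]; apply mul_le_mul_of_nonneg_left _ h0.le; linarith
  have hbh : h ≤ b := by
    rw [hb, le_div_iff₀ hjd]; apply mul_le_mul_of_nonneg_left _ h0.le; linarith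
  have hbH : b ≤ H := by rw [hb, div_le_iff₀ hjd]; exact hH
  have A := pp_up hF (hseg a ha0.le (by linarith)) hyi (by linarith : yi ≤ y4)
    (Hi a ha0.le (by linarith))
  have B := pp_up hF (hseg b (by linarith) hbH) hyj (by linarith : yj ≤ y4)
    (Hj b (by linarith) hbH)
  have eA : m - 2 * (σ * a) / yi = (m - 2 * σ * h * k) - 2 * (σ * (a - h)) / y4 := by
    simp only [div_eq_mul_inv]; linear_combination (-2 * σ) * haE
  have eB : m - 2 * (σ * b) / yj = (m - 2 * σ * h * k) - 2 * (σ * (b - h)) / y4 := by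
    simp only [div_eq_mul_inv]; linear_combination (-2 * σ) * hbE
  have eA' : s + σ * a = s + σ * h + σ * (a - h) := by ring
  have eB' : s + σ * b = s + σ * h + σ * (b - h) := by ring
  rw [eA, eA'] at A
  rw [eB, eB'] at B
  refine pp_up hF (hseg h h0.le (by linarith)) hy4 hy ?_
  rcases hσ with rfl | rfl
  · exact pp_slice hF' hy4 (by linarith) (by linarith) A B
  · exact pp_slice hF' hy4 (by linarith) (by linarith) B A

lemma pp_side {F : Set (ℝ × ℝ × ℝ)} (hF : HC3 F) {s m y : ℝ} (hy : 0 < y)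
    (h : pp s m y ∉ F) (H : ℝ) :
    (∀ h, 0 ≤ h → h ≤ H → pp (s + 1 * h) (m - 2 * (1 * h) / y) y ∉ F) ∨
    (∀ h, 0 ≤ h → h ≤ H → pp (s + (-1) * h) (m - 2 * ((-1) * h) / y) y ∉ F) := by
  by_contra hc
  push Not at hc
  obtain ⟨⟨a, ha, -, ha'⟩, ⟨b, hb, -, hb'⟩⟩ := hc
  exact h (pp_slice hF hy (by linarith) (by linarith) hb' ha')

lemma lemK {F : Set (ℝ × ℝ × ℝ)} (hF : HC3 F) (hF' : HC3 Fᶜ) {O : Set (ℝ × ℝ × ℝ)}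
    (hO : IsOpen O) {s0 m0 y0 r : ℝ} (hr : 0 < r) (hy0 : 0 < y0)
    (hseg : ∀ s, s0 - r ≤ s → s ≤ s0 + r → (s, 0, 0) ∈ F)
    (hq : pp s0 m0 y0 ∈ O) (hqF : pp s0 m0 y0 ∉ F) :
    ∃ O' ⊆ O, IsOpen O' ∧ O'.Nonempty ∧ O' ⊆ Fᶜ := by
  have hcont : Continuous (fun z : ℝ × ℝ × ℝ => pp z.1 z.2.1 z.2.2) := by
    unfold pp; fun_prop
  obtain ⟨δ, hδ, hball⟩ := Metric.isOpen_iff.1 (hO.preimage hcont) (s0, m0, y0) hq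
  have hN : ∀ s m y, |s - s0| < δ → |m - m0| < δ → |y - y0| < δ → pp s m y ∈ O := by
    intro s m y h1 h2 h3
    apply hball (show (s, m, y) ∈ _ from _)
    simp only [Metric.mem_ball, Prod.dist_eq, Real.dist_eq]
    exact max_lt h1 (max_lt h2 h3)
  set η := δ / 10 with hη
  have hη0 : 0 < η := by positivity
  have key : ∃ σ yi yj : ℝ, (σ = 1 ∨ σ = -1) ∧ y0 < yi ∧ yi < yj ∧ yj < y0 + 4 * η ∧
      (∀ h, 0 ≤ h → h ≤ r → pp (s0 + σ * h) (m0 - 2 * (σ * h) / yi) yi ∉ F) ∧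
      (∀ h, 0 ≤ h → h ≤ r → pp (s0 + σ * h) (m0 - 2 * (σ * h) / yj) yj ∉ F) := by
    have g : ∀ y, y0 ≤ y → _ := fun y hy => pp_side hF (by linarith)
      (pp_up hF (hseg s0 (by linarith) (by linarith)) hy0 hy hqF) r
    rcases g (y0 + η) (by linarith) with a | a <;>
    rcases g (y0 + 2 * η) (by linarith) with b | b <;>
    rcases g (y0 + 3 * η) (by linarith) with c | c
    · exact ⟨1, _, _, by simp, by linarith, by linarith, by linarith, a, b⟩
    · exact ⟨1, _, _, by simp, by linarith, by linarith, by linarith, a, b⟩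
    · exact ⟨1, _, _, by simp, by linarith, by linarith, by linarith, a, c⟩
    · exact ⟨-1, _, _, by simp, by linarith, by linarith, by linarith, b, c⟩
    · exact ⟨1, _, _, by simp, by linarith, by linarith, by linarith, b, c⟩
    · exact ⟨-1, _, _, by simp, by linarith, by linarith, by linarith, a, c⟩
    · exact ⟨-1, _, _, by simp, by linarith, by linarith, by linarith, a, b⟩
    · exact ⟨-1, _, _, by simp, by linarith, by linarith, by linarith, a, b⟩
  obtain ⟨σ, yi, yj, hσ, h0i, hij, hj4, Hi, Hj⟩ := key
  set y4 := y0 + 4 * η with hy4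
  have hyi : 0 < yi := by linarith
  have hyj : 0 < yj := by linarith
  have hy4' : 0 < y4 := by linarith
  have e1 : y4⁻¹ < yj⁻¹ := inv_strictAnti₀ hyj hj4
  have e2 : yj⁻¹ < yi⁻¹ := inv_strictAnti₀ hyi hij
  have e3 : 0 < y4⁻¹ := by positivity
  have hσσ : σ * σ = 1 := by rcases hσ with rfl | rfl <;> norm_num
  have hσa : |σ| = 1 := by rcases hσ with rfl | rfl <;> norm_num
  have hseg' : ∀ h, 0 ≤ h → h ≤ r → (s0 + σ * h, (0 : ℝ), (0 : ℝ)) ∈ F := by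
    intro h h1 h2
    rcases hσ with rfl | rfl <;> exact hseg _ (by linarith) (by linarith)
  have hjd : 0 < yj⁻¹ - y4⁻¹ := by linarith
  have hid : 0 < yi⁻¹ - y4⁻¹ := by linarith
  set H' := r * (yj⁻¹ - y4⁻¹) / (yi⁻¹ - y4⁻¹) with hH'
  have hH'E : H' * (yi⁻¹ - y4⁻¹) = r * (yj⁻¹ - y4⁻¹) := div_mul_cancel₀ _ hid.ne'
  have hH'0 : 0 < H' := by positivity
  -- the open set
  let V : Set (ℝ × ℝ × ℝ) := {z | y4 < z.2.1}
  let hh : ℝ × ℝ × ℝ → ℝ := fun z => σ * (-z.2.2 / (2 * z.2.1) - s0)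
  let mm : ℝ × ℝ × ℝ → ℝ := fun z => σ * (m0 - (z.1 + z.2.2 / (2 * z.2.1)) / z.2.1)
  have hV : IsOpen V := isOpen_lt continuous_const (by fun_prop)
  have hhc : ContinuousOn hh V := by
    have : ∀ z ∈ V, 2 * z.2.1 ≠ 0 := fun z hz => by
      have : y4 < z.2.1 := hz
      have : 0 < z.2.1 := by linarith
      positivity
    fun_prop (disch := assumption)
  have hmc : ContinuousOn mm V := by
    have h1 : ∀ z ∈ V, z.2.1 ≠ 0 := fun z hz => by
      have : y4 < z.2.1 := hz
      have : 0 < z.2.1 := by linarith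
      positivity
    have : ∀ z ∈ V, 2 * z.2.1 ≠ 0 := fun z hz => mul_ne_zero two_ne_zero (h1 z hz)
    fun_prop (disch := assumption)
  let G : ℝ × ℝ × ℝ → ℝ × ℝ := fun z => (hh z, mm z)
  have hG : ContinuousOn G V := hhc.prodMk hmc
  let T : Set (ℝ × ℝ) := {w | 0 < w.1 ∧ w.1 < H' ∧ 2 * w.1 * yj⁻¹ < w.2 ∧ w.2 < 2 * w.1 * yi⁻¹}
  have hT : IsOpen T := by
    refine (isOpen_lt continuous_const continuous_fst).inter
      ((isOpen_lt continuous_fst continuous_const).inter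
      ((isOpen_lt (by fun_prop) continuous_snd).inter (isOpen_lt continuous_snd (by fun_prop))))
  have hW : IsOpen (V ∩ G ⁻¹' T) := hG.isOpen_inter_preimage hV hT
  refine ⟨O ∩ (V ∩ G ⁻¹' T), Set.inter_subset_left, hO.inter hW, ?_, ?_⟩
  · -- nonempty
    set k := (yj⁻¹ + yi⁻¹) / 2 with hk
    have hk0 : 0 < k := by linarith
    obtain ⟨h, h0, hlt⟩ : ∃ h, 0 < h ∧ h < min H' (min δ (δ / (2 * k))) :=
      exists_between (by positivity)
    have l1 : h < H' := lt_of_lt_of_le hlt (min_le_left _ _)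
    have l2 : h < δ := lt_of_lt_of_le hlt ((min_le_right _ _).trans (min_le_left _ _))
    have l3 : h < δ / (2 * k) := lt_of_lt_of_le hlt ((min_le_right _ _).trans (min_le_right _ _))
    rw [lt_div_iff₀ (by positivity)] at l3
    set y := y0 + 5 * η with hy
    have hypos : 0 < y := by linarith
    refine ⟨pp (s0 + σ * h) (m0 - σ * (2 * h * k)) y, ?_, ?_, ?_⟩
    · apply hN
      · rw [add_sub_cancel_left, abs_mul, hσa, one_mul, abs_of_pos h0]; exact l2
      · rw [sub_sub_cancel_left, abs_neg, abs_mul, hσa, one_mul, abs_of_pos (by positivity)]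
        linarith
      · rw [hy, add_sub_cancel_left, abs_of_pos (by positivity)]; linarith
    · show y4 < y
      linarith
    · have q1 : hh (pp (s0 + σ * h) (m0 - σ * (2 * h * k)) y) = h := by
        simp only [hh, pp]; field_simp; linear_combination (h) * hσσ
      have q2 : mm (pp (s0 + σ * h) (m0 - σ * (2 * h * k)) y) = 2 * h * k := by
        have q3 : (s0 + σ * h + (m0 - σ * (2 * h * k)) * y + -2 * y * (s0 + σ * h) / (2 * y)) / y
            = m0 - σ * (2 * h * k) := by
          clear_value y k
          field_simp
          ring
        simp only [mm, pp]
        rw [q3]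
        linear_combination (2 * h * k) * hσσ
      show (_ , _) ∈ T
      rw [q1, q2]
      refine ⟨h0, l1, ?_, ?_⟩
      · show 2 * h * yj⁻¹ < 2 * h * k
        apply mul_lt_mul_of_pos_left _ (by positivity); linarith
      · show 2 * h * k < 2 * h * yi⁻¹
        apply mul_lt_mul_of_pos_left _ (by positivity); linarith
  · rintro ⟨x, y, t⟩ ⟨-, hzV, h1, h2, h3, h4⟩
    have hzV : y4 < y := hzV
    have hypos : 0 < y := by linarith
    set h := hh (x, y, t) with hhdef
    set M := mm (x, y, t) with hMdef
    have h1 : 0 < h := h1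
    have h2 : h < H' := h2
    have h3 : 2 * h * yj⁻¹ < M := h3
    have h4 : M < 2 * h * yi⁻¹ := h4
    have hkE : M = 2 * h * (M / (2 * h)) := by field_simp
    set k := M / (2 * h) with hk
    have k1 : yj⁻¹ < k := by
      rw [hkE] at h3; exact lt_of_mul_lt_mul_left h3 (by positivity)
    have k2 : k < yi⁻¹ := by
      rw [hkE] at h4; exact lt_of_mul_lt_mul_left h4 (by positivity)
    have fin := pp_tri hF hF' hσ hyi hij hj4 hseg' Hi Hj h1 k1 k2 (by
      rw [← hH'E]
      apply mul_le_mul h2.le (by linarith) (by linarith) hH'0.le) hzV.le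
    have r1 : s0 + σ * h = -t / (2 * y) := by
      simp only [hhdef, hh]; linear_combination (-t / (2 * y) - s0) * hσσ
    have r2 : m0 - 2 * σ * h * k = (x + t / (2 * y)) / y := by
      have : m0 - 2 * σ * h * k = m0 - σ * M := by rw [hkE]; ring
      rw [this]; simp only [hMdef, mm]
      linear_combination (-(m0 - (x + t / (2 * y)) / y)) * hσσ
    rw [r1, r2] at fin
    have : pp (-t / (2 * y)) ((x + t / (2 * y)) / y) y = (x, y, t) := by
      simp only [pp, Prod.mk.injEq]
      refine ⟨by field_simp; ring, trivial, by field_simp⟩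
    rw [this] at fin; exact fin

lemma lemSeg {F : Set (ℝ × ℝ × ℝ)} (hF : HC3 F) (hF' : HC3 Fᶜ) {O : Set (ℝ × ℝ × ℝ)}
    (hO : IsOpen O) {s1 s2 : ℝ} (h12 : s1 < s2) (hO0 : ((s1 + s2) / 2, 0, 0) ∈ O)
    (h1 : (s1, 0, 0) ∈ F) (h2 : (s2, 0, 0) ∈ F) :
    ∃ O' ⊆ O, IsOpen O' ∧ O'.Nonempty ∧ (O' ⊆ F ∨ O' ⊆ Fᶜ) := by
  have hseg : ∀ s, s1 ≤ s → s ≤ s2 → (s, (0 : ℝ), (0 : ℝ)) ∈ F := by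
    intro s a b
    have hd : 0 < s2 - s1 := by linarith
    have := hF s1 0 0 (s2 - s1) 0 ((s - s1) / (s2 - s1)) h1 (by simpa using h2)
      (by apply div_nonneg <;> linarith) (by rw [div_le_one hd]; linarith)
    convert this using 1
    simp only [Prod.mk.injEq]
    refine ⟨by field_simp; ring, by ring, by ring⟩
  let W : Set (ℝ × ℝ × ℝ) :=
    {z | 0 < z.2.1 ∧ 2 * z.2.1 * s1 < -z.2.2 ∧ -z.2.2 < 2 * z.2.1 * s2}
  have hW : IsOpen W := by
    refine IsOpen.and ?_ (IsOpen.and ?_ ?_) <;> exact isOpen_lt (by fun_prop) (by fun_prop)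
  by_cases hsub : O ∩ W ⊆ F
  · refine ⟨O ∩ W, Set.inter_subset_left, hO.inter hW, ?_, Or.inl hsub⟩
    have hc : Continuous (fun y : ℝ => pp ((s1 + s2) / 2) 0 y) := by unfold pp; fun_prop
    obtain ⟨δ, hδ, hb⟩ := Metric.isOpen_iff.1 (hO.preimage hc) 0 (by simpa [pp] using hO0)
    refine ⟨pp ((s1 + s2) / 2) 0 (δ / 2), hb ?_, ?_⟩
    · simp only [Metric.mem_ball, Real.dist_eq, sub_zero]
      rw [abs_of_pos (by positivity)]; linarith
    · refine ⟨?_, ?_, ?_⟩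
      · show 0 < δ / 2
        positivity
      · show 2 * (δ / 2) * s1 < -(-2 * (δ / 2) * ((s1 + s2) / 2))
        nlinarith
      · show -(-2 * (δ / 2) * ((s1 + s2) / 2)) < 2 * (δ / 2) * s2
        nlinarith
  · obtain ⟨⟨x, y, t⟩, ⟨hq, w1, w2, w3⟩, hqF⟩ := Set.not_subset.1 hsub
    have w1 : 0 < y := w1
    have w2 : 2 * y * s1 < -t := w2
    have w3 : -t < 2 * y * s2 := w3
    have e : pp (-t / (2 * y)) ((x + t / (2 * y)) / y) y = (x, y, t) := by
      simp only [pp, Prod.mk.injEq]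
      refine ⟨by field_simp; ring, trivial, by field_simp⟩
    have v1 : s1 < -t / (2 * y) := by rw [lt_div_iff₀ (by positivity)]; linarith
    have v2 : -t / (2 * y) < s2 := by rw [div_lt_iff₀ (by positivity)]; linarith
    rw [← e] at hq hqF
    obtain ⟨r, hr, hr'⟩ : ∃ r, 0 < r ∧ r < min (-t / (2 * y) - s1) (s2 - -t / (2 * y)) :=
      exists_between (lt_min (by linarith) (by linarith))
    have r1 := lt_of_lt_of_le hr' (min_le_left _ _)
    have r2 := lt_of_lt_of_le hr' (min_le_right _ _)
    obtain ⟨O', a, b, c, d⟩ := lemK hF hF' hO hr w1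
      (fun s a b => hseg s (by linarith) (by linarith)) hq hqF
    exact ⟨O', a, b, c, Or.inr d⟩

lemma lemH0 {F : Set (ℝ × ℝ × ℝ)} (hF : HC3 F) (hF' : HC3 Fᶜ) {O : Set (ℝ × ℝ × ℝ)}
    (hO : IsOpen O) (hO0 : (0, 0, 0) ∈ O) :
    ∃ O' ⊆ O, IsOpen O' ∧ O'.Nonempty ∧ (O' ⊆ F ∨ O' ⊆ Fᶜ) := by
  have hc : Continuous (fun s : ℝ => ((s, 0, 0) : ℝ × ℝ × ℝ)) := by fun_prop
  obtain ⟨δ, hδ, hb⟩ := Metric.isOpen_iff.1 (hO.preimage hc) 0 hO0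
  have hb' : ∀ s, |s| < δ → (s, (0 : ℝ), (0 : ℝ)) ∈ O := fun s hs =>
    hb (show s ∈ _ by simpa [Real.dist_eq] using hs)
  have P : ∀ s1 s2 : ℝ, s1 < s2 → -δ < s1 → s2 < δ →
      ((s1, (0 : ℝ), (0 : ℝ)) ∈ F ↔ (s2, (0 : ℝ), (0 : ℝ)) ∈ F) →
      ∃ O' ⊆ O, IsOpen O' ∧ O'.Nonempty ∧ (O' ⊆ F ∨ O' ⊆ Fᶜ) := by
    intro s1 s2 h12 a b hiff
    have hm := hb' ((s1 + s2) / 2) (by rw [abs_lt]; constructor <;> linarith)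
    by_cases h : (s1, (0 : ℝ), (0 : ℝ)) ∈ F
    · exact lemSeg hF hF' hO h12 hm h (hiff.1 h)
    · obtain ⟨O', a, b, c, d⟩ := lemSeg hF' (by rwa [compl_compl]) hO h12 hm h
        (fun h' => h (hiff.2 h'))
      rw [compl_compl] at d
      exact ⟨O', a, b, c, d.symm⟩
  by_cases a : (-(δ / 2), (0 : ℝ), (0 : ℝ)) ∈ F ↔ ((0 : ℝ), (0 : ℝ), (0 : ℝ)) ∈ F
  · exact P _ _ (by linarith) (by linarith) (by linarith) a
  by_cases b : ((0 : ℝ), (0 : ℝ), (0 : ℝ)) ∈ F ↔ (δ / 2, (0 : ℝ), (0 : ℝ)) ∈ F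
  · exact P _ _ (by linarith) (by linarith) (by linarith) b
  · exact P (-(δ / 2)) (δ / 2) (by linarith) (by linarith) (by linarith) (by tauto)

/-- left translation in the Heisenberg group -/
def trl (p z : ℝ × ℝ × ℝ) : ℝ × ℝ × ℝ :=
  (p.1 + z.1, p.2.1 + z.2.1, p.2.2 + z.2.2 + 2 * (p.2.1 * z.1 - z.2.1 * p.1))

lemma HC3.tr {F : Set (ℝ × ℝ × ℝ)} (hF : HC3 F) (p : ℝ × ℝ × ℝ) : HC3 (trl p ⁻¹' F) := by
  intro x y t a b s h1 h2 h3 h4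
  have := hF _ _ _ a b s h1 (by
    have h2 : trl p _ ∈ F := h2
    convert h2 using 1
    simp only [trl, Prod.mk.injEq]
    refine ⟨by ring, by ring, by ring⟩) h3 h4
  show trl p _ ∈ F
  convert this using 1
  simp only [trl, Prod.mk.injEq]
  refine ⟨by ring, by ring, by ring⟩

lemma lemH {F : Set (ℝ × ℝ × ℝ)} (hF : HC3 F) (hF' : HC3 Fᶜ) {O : Set (ℝ × ℝ × ℝ)}
    (hO : IsOpen O) (hne : O.Nonempty) :
    ∃ O' ⊆ O, IsOpen O' ∧ O'.Nonempty ∧ (O' ⊆ F ∨ O' ⊆ Fᶜ) := by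
  obtain ⟨p, hp⟩ := hne
  have hc : ∀ p, Continuous (trl p) := fun p => by unfold trl; fun_prop
  have e1 : ∀ z, trl p (trl (-p) z) = z := by
    rintro ⟨x, y, t⟩
    simp only [trl, Prod.mk.injEq, Prod.fst_neg, Prod.snd_neg]
    refine ⟨by ring, by ring, by ring⟩
  have e2 : ∀ z, trl (-p) (trl p z) = z := by
    rintro ⟨x, y, t⟩
    simp only [trl, Prod.mk.injEq, Prod.fst_neg, Prod.snd_neg]
    refine ⟨by ring, by ring, by ring⟩
  obtain ⟨O', a, b, ⟨z, hz⟩, d⟩ := lemH0 (hF.tr p) (hF'.tr p) (hO.preimage (hc p))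
    (by show trl p _ ∈ O; simpa [trl] using hp)
  refine ⟨trl (-p) ⁻¹' O', ?_, b.preimage (hc _), ⟨trl p z, ?_⟩, ?_⟩
  · intro w hw
    have := a hw
    rwa [Set.mem_preimage, e1] at this
  · rwa [Set.mem_preimage, e2]
  · refine d.imp (fun d w hw => ?_) (fun d w hw => ?_)
    · have := d hw
      rwa [Set.mem_preimage, e1] at this
    · have := d hw
      rw [← Set.preimage_compl, Set.mem_preimage, e1] at this
      exact this

/-- embedding of a slice -/
def emb (u : ℝ) (z : ℝ × ℝ × ℝ) : Fin 4 → ℝ := ![z.1, z.2.1, u, z.2.2]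

lemma HRConvex.slice {E : Set (Fin 4 → ℝ)} (hE : HRConvex E) (u : ℝ) : HC3 (emb u ⁻¹' E) := by
  intro x y t a b s h1 h2 h3 h4
  have := hE _ h1 a b 0 (by
    convert Set.mem_preimage.1 h2 using 1
    simp [emb, hmul]) s h3 h4
  rw [Set.mem_preimage]
  convert this using 1
  simp [emb, hmul]
  ring

lemma HRConvex.vert {E : Set (Fin 4 → ℝ)} (hE : HRConvex E) {u1 u2 u : ℝ} {z : ℝ × ℝ × ℝ}
    (h1 : emb u1 z ∈ E) (h2 : emb u2 z ∈ E) (h : u1 < u) (h' : u < u2) : emb u z ∈ E := by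
  have hd : 0 < u2 - u1 := by linarith
  have := hE _ h1 0 0 (u2 - u1) (by
    convert h2 using 1
    simp [emb, hmul]) ((u - u1) / (u2 - u1)) (by apply div_nonneg <;> linarith)
    (by rw [div_le_one hd]; linarith)
  convert this using 1
  have e : (u - u1) / (u2 - u1) * (u2 - u1) = u - u1 := by field_simp
  simp [emb, hmul, e]

theorem monotone_boundary_empty_interior
    (E : Set (Fin 4 → ℝ)) (hE : PreciselyMonotone E) :
    interior (frontier E) = ∅ := by
  by_contra hne
  obtain ⟨P, hP⟩ := Set.nonempty_iff_ne_empty.2 hne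
  have hembc : Continuous (fun w : (ℝ × ℝ × ℝ) × ℝ => emb w.2 w.1) := by
    unfold emb
    refine continuous_pi fun i => ?_
    fin_cases i <;> simp <;> fun_prop
  have hop := (isOpen_interior (s := frontier E)).preimage hembc
  have hPe : emb (P 2) (P 0, P 1, P 3) = P := by
    ext i; fin_cases i <;> rfl
  obtain ⟨W, I, hW, hI, hPW, hPI, hWI⟩ := isOpen_prod_iff.1 hop (P 0, P 1, P 3) (P 2)
    (by rw [Set.mem_preimage]; simpa only [hPe] using hP)
  obtain ⟨δ, hδ, hb⟩ := Metric.isOpen_iff.1 hI _ hPI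
  have hb' : ∀ u, P 2 ≤ u → u < P 2 + δ → u ∈ I := fun u h1 h2 => hb (by
    rw [Metric.mem_ball, Real.dist_eq, abs_lt]; constructor <;> linarith)
  have hprojc : Continuous (fun Q : Fin 4 → ℝ => ((Q 0, Q 1, Q 3) : ℝ × ℝ × ℝ)) := by fun_prop
  have fin : ∀ u1 u2 : ℝ, P 2 ≤ u1 → u1 < u2 → u2 < P 2 + δ → ∀ V ⊆ W, IsOpen V → V.Nonempty →
      (V ⊆ emb u1 ⁻¹' E ∧ V ⊆ emb u2 ⁻¹' E ∨ V ⊆ (emb u1 ⁻¹' E)ᶜ ∧ V ⊆ (emb u2 ⁻¹' E)ᶜ) →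
      False := by
    intro u1 u2 h1 h12 h2 V hVW hV ⟨z, hz⟩ hcase
    let B : Set (Fin 4 → ℝ) := {Q | (Q 0, Q 1, Q 3) ∈ V ∧ u1 < Q 2 ∧ Q 2 < u2}
    have hB : IsOpen B := by
      refine IsOpen.and (hV.preimage hprojc) (IsOpen.and ?_ ?_) <;>
        exact isOpen_lt (by fun_prop) (by fun_prop)
    have hQe : ∀ Q : Fin 4 → ℝ, emb (Q 2) (Q 0, Q 1, Q 3) = Q := by
      intro Q; ext i; fin_cases i <;> rfl
    have hzB : emb ((u1 + u2) / 2) z ∈ B := by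
      refine ⟨hz, ?_, ?_⟩
      · show u1 < (u1 + u2) / 2
        linarith
      · show (u1 + u2) / 2 < u2
        linarith
    have hzf : emb ((u1 + u2) / 2) z ∈ frontier E :=
      interior_subset (hWI (Set.mk_mem_prod (hVW hz) (hb' _ (by linarith) (by linarith))))
    rcases hcase with ⟨c1, c2⟩ | ⟨c1, c2⟩
    · have : B ⊆ E := by
        rintro Q ⟨q1, q2, q3⟩
        rw [← hQe Q]
        exact hE.1.vert (c1 q1) (c2 q1) q2 q3
      exact hzf.2 (interior_maximal this hB hzB)
    · have : B ⊆ Eᶜ := by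
        rintro Q ⟨q1, q2, q3⟩
        rw [← hQe Q]
        exact hE.2.vert (c1 q1) (c2 q1) q2 q3
      have h3 := interior_maximal this hB hzB
      rw [interior_compl] at h3
      exact h3 hzf.1
  have S : ∀ u, ∀ O : Set (ℝ × ℝ × ℝ), IsOpen O → O.Nonempty → _ :=
    fun u O hO hne => lemH (hE.1.slice u) (hE.2.slice u) hO hne
  obtain ⟨V1, a1, b1, c1, d1⟩ := S (P 2) W hW ⟨_, hPW⟩
  obtain ⟨V2, a2, b2, c2, d2⟩ := S (P 2 + δ / 3) V1 b1 c1
  obtain ⟨V3, a3, b3, c3, d3⟩ := S (P 2 + δ / 2) V2 b2 c2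
  have f12 := fin (P 2) (P 2 + δ / 3) le_rfl (by linarith) (by linarith) V3
    (a3.trans (a2.trans a1)) b3 c3
  have f13 := fin (P 2) (P 2 + δ / 2) le_rfl (by linarith) (by linarith) V3
    (a3.trans (a2.trans a1)) b3 c3
  have f23 := fin (P 2 + δ / 3) (P 2 + δ / 2) (by linarith) (by linarith) (by linarith) V3
    (a3.trans (a2.trans a1)) b3 c3
  have d1' := d1.imp (fun h => (a3.trans a2).trans h) (fun h => (a3.trans a2).trans h)
  have d2' := d2.imp (fun h => a3.trans h) (fun h => a3.trans h)
  rcases d1' with d1 | d1 <;> rcases d2' with d2 | d2 <;> rcases d3 with d3 | d3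
  · exact f12 (Or.inl ⟨d1, d2⟩)
  · exact f12 (Or.inl ⟨d1, d2⟩)
  · exact f13 (Or.inl ⟨d1, d3⟩)
  · exact f23 (Or.inr ⟨d2, d3⟩)
  · exact f23 (Or.inl ⟨d2, d3⟩)
  · exact f13 (Or.inr ⟨d1, d3⟩)
  · exact f12 (Or.inr ⟨d1, d2⟩)
  · exact f12 (Or.inr ⟨d1, d2⟩)
end
end

section
/- Let E ⊆ ℝ⁴ = ℍ×ℝ be precisely monotone and let P ∈ ℝ⁴. If the horizontal plane H_P = {P·(a,b,c,0) : (a,b,c) ∈ ℝ³} is contained in ∂E, then ∂E = H_P. -/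
/- The group `ℍ×ℝ`: `ℝ⁴` with coordinates `(x,y,u,t)` and law
`(x,y,u,t)·(x',y',u',t') = (x+x', y+y', u+u', t+t'+2(yx'−y'x))`. -/

noncomputable section

open Topology Filter Set

theorem vec4_eta (q : Fin 4 → ℝ) : q = ![q 0, q 1, q 2, q 3] := by
  ext i; fin_cases i <;> rfl

theorem vec4_congr {C : Set (Fin 4 → ℝ)} {x y u t x' y' u' t' : ℝ} (h : ![x, y, u, t] ∈ C)
    (hx : x = x') (hy : y = y') (hu : u = u') (ht : t = t') : ![x', y', u', t'] ∈ C := by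
  subst hx hy hu ht; exact h

theorem hmul_vec (x y u t a b c : ℝ) : hmul ![x, y, u, t] ![a, b, c, 0] =
    ![x + a, y + b, u + c, t + 2 * (y * a - b * x)] := by
  simp [hmul]

theorem tendsto_vec4 {ι : Type} {l : Filter ι} {f0 f1 f2 f3 : ι → ℝ} {x y u t : ℝ}
    (h0 : Tendsto f0 l (𝓝 x)) (h1 : Tendsto f1 l (𝓝 y)) (h2 : Tendsto f2 l (𝓝 u))
    (h3 : Tendsto f3 l (𝓝 t)) :
    Tendsto (fun i => (![f0 i, f1 i, f2 i, f3 i] : Fin 4 → ℝ)) l (𝓝 ![x, y, u, t]) := by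
  rw [tendsto_pi_nhds]
  intro i
  fin_cases i
  · exact h0
  · exact h1
  · exact h2
  · exact h3

theorem hconv {C : Set (Fin 4 → ℝ)} (hC : HRConvex C) {x y u t x' y' u' t' : ℝ} (s : ℝ)
    (h : ![x, y, u, t] ∈ C) (h' : ![x', y', u', t'] ∈ C)
    (ht : t' = t + 2 * (y * x' - y' * x)) (hs0 : 0 ≤ s) (hs1 : s ≤ 1) :
    ![x + s * (x' - x), y + s * (y' - y), u + s * (u' - u), t + s * (t' - t)] ∈ C := by
  have := hC _ h (x' - x) (y' - y) (u' - u) (by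
    rw [hmul_vec]
    exact vec4_congr h' (by ring) (by ring) (by ring) (by rw [ht]; ring)) s hs0 hs1
  rw [hmul_vec] at this
  exact vec4_congr this rfl rfl rfl (by rw [ht]; ring)

theorem PreciselyMonotone.compl {E : Set (Fin 4 → ℝ)} (hE : PreciselyMonotone E) :
    PreciselyMonotone Eᶜ := ⟨hE.2, by rw [compl_compl]; exact hE.1⟩

/-- Two-step cone lemma. -/
theorem cone_lemma {E O : Set (Fin 4 → ℝ)} (hO : IsOpen O) {x y u t a b c σ : ℝ}
    (hab : a ^ 2 + b ^ 2 ≠ 0) (h0 : σ ≠ 0) (h2 : 2 - σ ≠ 0)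
    (hq : ![x, y, u, t] ∈ closure E)
    (hQ : ![x + a, y + b, u + c, t + 2 * (y * a - b * x)] ∈ O)
    (H1 : ∀ p ∈ E, ∀ a b c : ℝ, hmul p ![a, b, c, 0] ∈ O →
      hmul p ![σ / 2 * a, σ / 2 * b, σ / 2 * c, 0] ∈ E)
    (H2 : ∀ p ∈ E, ∀ a b c : ℝ, hmul p ![a, b, c, 0] ∈ O →
      hmul p ![σ / (2 - σ) * a, σ / (2 - σ) * b, σ / (2 - σ) * c, 0] ∈ E) :
    ![x + σ * a, y + σ * b, u + σ * c, t + 2 * (y * (σ * a) - σ * b * x)] ∈ interior E := by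
  set q : Fin 4 → ℝ := ![x, y, u, t] with hqdef
  set r : Fin 4 → ℝ :=
    ![x + σ * a, y + σ * b, u + σ * c, t + 2 * (y * (σ * a) - σ * b * x)] with hrdef
  -- components of `q'⁻¹ r'`
  let g1 : (Fin 4 → ℝ) × (Fin 4 → ℝ) → ℝ := fun z => z.2 0 - z.1 0
  let g2 : (Fin 4 → ℝ) × (Fin 4 → ℝ) → ℝ := fun z => z.2 1 - z.1 1
  let g3 : (Fin 4 → ℝ) × (Fin 4 → ℝ) → ℝ := fun z => z.2 2 - z.1 2
  let g4 : (Fin 4 → ℝ) × (Fin 4 → ℝ) → ℝ := fun z =>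
    z.2 3 - z.1 3 - 2 * (z.1 1 * g1 z - g2 z * z.1 0)
  let lam : (Fin 4 → ℝ) × (Fin 4 → ℝ) → ℝ := fun z => - g4 z / (2 * (g1 z ^ 2 + g2 z ^ 2))
  let k1 : (Fin 4 → ℝ) × (Fin 4 → ℝ) → ℝ := fun z => lam z * g2 z
  let k2 : (Fin 4 → ℝ) × (Fin 4 → ℝ) → ℝ := fun z => - (lam z * g1 z)
  let m : (Fin 4 → ℝ) × (Fin 4 → ℝ) → (Fin 4 → ℝ) := fun z =>
    hmul z.1 ![g1 z / 2 + k1 z, g2 z / 2 + k2 z, g3 z / 2, 0]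
  let A : (Fin 4 → ℝ) × (Fin 4 → ℝ) → (Fin 4 → ℝ) := fun z =>
    hmul z.1 ![2 / σ * (g1 z / 2 + k1 z), 2 / σ * (g2 z / 2 + k2 z), 2 / σ * (g3 z / 2), 0]
  let B : (Fin 4 → ℝ) × (Fin 4 → ℝ) → (Fin 4 → ℝ) := fun z =>
    hmul (m z) ![(2 - σ) / σ * (g1 z / 2 - k1 z), (2 - σ) / σ * (g2 z / 2 - k2 z),
      (2 - σ) / σ * (g3 z / 2), 0]
  have e1 : g1 (q, r) = σ * a := by simp [g1, q, r]
  have e2 : g2 (q, r) = σ * b := by simp [g2, q, r]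
  have e3 : g3 (q, r) = σ * c := by simp [g3, q, r]
  have e4 : g4 (q, r) = 0 := by simp only [g4, e1, e2]; simp [q, r]
  have el : lam (q, r) = 0 := by simp [lam, e4]
  have ek1 : k1 (q, r) = 0 := by simp [k1, el]
  have ek2 : k2 (q, r) = 0 := by simp [k2, el]
  have hden : g1 (q, r) ^ 2 + g2 (q, r) ^ 2 ≠ 0 := by
    rw [e1, e2]
    have : (σ * a) ^ 2 + (σ * b) ^ 2 = σ ^ 2 * (a ^ 2 + b ^ 2) := by ring
    rw [this]; positivity
  have c1 : Continuous g1 := by fun_prop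
  have c2 : Continuous g2 := by fun_prop
  have c3 : Continuous g3 := by fun_prop
  have c4 : Continuous g4 := by fun_prop
  have cl : ContinuousAt lam (q, r) := by
    apply ContinuousAt.div
    · exact c4.continuousAt.neg
    · exact (continuous_const.mul ((c1.pow 2).add (c2.pow 2))).continuousAt
    · simpa using hden
  have ck1 : ContinuousAt k1 (q, r) := cl.mul c2.continuousAt
  have ck2 : ContinuousAt k2 (q, r) := (cl.mul c1.continuousAt).neg
  have c1' := c1.continuousAt (x := (q, r))
  have c2' := c2.continuousAt (x := (q, r))
  have c3' := c3.continuousAt (x := (q, r))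
  have cz (i : Fin 4) : ContinuousAt (fun z : (Fin 4 → ℝ) × (Fin 4 → ℝ) => z.1 i) (q, r) := by
    fun_prop
  have cmul : ∀ (f : (Fin 4 → ℝ) × (Fin 4 → ℝ) → (Fin 4 → ℝ)) (a b c : _ → ℝ),
      ContinuousAt f (q, r) → ContinuousAt a (q, r) → ContinuousAt b (q, r) →
      ContinuousAt c (q, r) → ContinuousAt (fun z => hmul (f z) ![a z, b z, c z, 0]) (q, r) := by
    intro f a b c hf ha hb hc
    have hfi (i : Fin 4) : ContinuousAt (fun z => f z i) (q, r) :=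
      (continuous_apply i).continuousAt.comp hf
    have h0 := hfi 0
    have h1 := hfi 1
    have h2 := hfi 2
    have h3 := hfi 3
    have : (fun z => hmul (f z) ![a z, b z, c z, 0]) = fun z => ![f z 0 + a z, f z 1 + b z,
      f z 2 + c z, f z 3 + 2 * (f z 1 * a z - b z * f z 0)] := by
      ext z i; simp [hmul]
    rw [this]
    apply tendsto_vec4 (f0 := fun z => f z 0 + a z) (f1 := fun z => f z 1 + b z)
      (f2 := fun z => f z 2 + c z) (f3 := fun z => f z 3 + 2 * (f z 1 * a z - b z * f z 0))
    · exact h0.add ha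
    · exact h1.add hb
    · exact h2.add hc
    · exact h3.add ((h1.mul ha |>.sub (hb.mul h0)).const_mul 2)
  have cm : ContinuousAt m (q, r) := by
    apply cmul
    · exact continuousAt_fst
    · exact (c1'.div_const 2).add ck1
    · exact (c2'.div_const 2).add ck2
    · exact c3'.div_const 2
  have cA : ContinuousAt A (q, r) := by
    apply cmul
    · exact continuousAt_fst
    · exact ((c1'.div_const 2).add ck1).const_mul _
    · exact ((c2'.div_const 2).add ck2).const_mul _
    · exact (c3'.div_const 2).const_mul _
  have cB : ContinuousAt B (q, r) := by
    apply cmul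
    · exact cm
    · exact ((c1'.div_const 2).sub ck1).const_mul _
    · exact ((c2'.div_const 2).sub ck2).const_mul _
    · exact (c3'.div_const 2).const_mul _
  have eA : A (q, r) ∈ O := by
    simp only [A, e1, e2, e3, ek1, ek2]
    rw [hqdef, hmul_vec]
    refine vec4_congr hQ ?_ ?_ ?_ ?_ <;> field_simp <;> ring
  have eB : B (q, r) ∈ O := by
    simp only [B, m, e1, e2, e3, ek1, ek2]
    rw [hqdef, hmul_vec, hmul_vec]
    refine vec4_congr hQ ?_ ?_ ?_ ?_ <;> field_simp <;> ring
  have ev : ∀ᶠ z in 𝓝 (q, r), A z ∈ O ∧ B z ∈ O ∧ g1 z ^ 2 + g2 z ^ 2 ≠ 0 := by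
    refine (cA.eventually_mem (hO.mem_nhds eA)).and ((cB.eventually_mem (hO.mem_nhds eB)).and ?_)
    exact ((c1.pow 2).add (c2.pow 2)).continuousAt.eventually_ne hden
  rw [nhds_prod_eq, eventually_prod_iff] at ev
  obtain ⟨pa, hpa, pb, hpb, hp⟩ := ev
  obtain ⟨q', hq'a, hq'E⟩ := mem_closure_iff_nhds.1 hq _ hpa
  rw [mem_interior_iff_mem_nhds]
  filter_upwards [hpb] with r' hr'
  obtain ⟨hA, hB, hd⟩ := hp hq'a hr'
  have s1 := H1 q' hq'E _ _ _ hA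
  have hm : m (q', r') ∈ E := by
    convert s1 using 3
    · field_simp
    · congr 1
      · field_simp
      · congr 1
        field_simp
  have s2 := H2 _ hm _ _ _ hB
  convert s2 using 1
  have hk : 2 * (lam (q', r') * (g1 (q', r') ^ 2 + g2 (q', r') ^ 2)) = - g4 (q', r') := by
    simp only [lam]; field_simp
  have f1 : ∀ w : ℝ, σ / (2 - σ) * ((2 - σ) / σ * w) = w := by intro w; field_simp
  simp only [f1]
  have hk' : r' 3 = q' 3 + 2 * (q' 1 * g1 (q', r') - g2 (q', r') * q' 0)
     - 2 * (lam (q', r') * (g1 (q', r') ^ 2 + g2 (q', r') ^ 2)) := by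
    rw [hk]; simp only [g4]; ring
  have r0 : r' 0 = q' 0 + g1 (q', r') := by simp [g1]
  have r1 : r' 1 = q' 1 + g2 (q', r') := by simp [g2]
  have r2 : r' 2 = q' 2 + g3 (q', r') := by simp [g3]
  simp only [m, k1, k2]
  generalize g1 (q', r') = G1 at hk' r0 ⊢
  generalize g2 (q', r') = G2 at hk' r1 ⊢
  generalize g3 (q', r') = G3 at r2 ⊢
  generalize lam (q', r') = L at hk' ⊢
  ext i; fin_cases i <;> simp [hmul, r0, r1, r2, hk'] <;> ring

theorem lemA' {E : Set (Fin 4 → ℝ)} (hE : PreciselyMonotone E) {x y u t a b c : ℝ} (s : ℝ)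
    (hab : a ^ 2 + b ^ 2 ≠ 0) (hs : s < 0)
    (hq : ![x, y, u, t] ∈ closure E)
    (hQ : ![x + a, y + b, u + c, t + 2 * (y * a - b * x)] ∈ interior Eᶜ) :
    ![x + s * a, y + s * b, u + s * c, t + 2 * (y * (s * a) - s * b * x)] ∈ interior E := by
  have key : ∀ τ : ℝ, τ < 0 → ∀ p ∈ E, ∀ a b c : ℝ, hmul p ![a, b, c, 0] ∈ interior Eᶜ →
      hmul p ![τ * a, τ * b, τ * c, 0] ∈ E := by
    intro τ hτ p hp a b c h
    by_contra hn
    have h := interior_subset h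
    have hn : hmul p ![τ * a, τ * b, τ * c, 0] ∈ Eᶜ := hn
    rw [vec4_eta p] at hp h hn
    rw [hmul_vec] at h hn
    have := hconv hE.2 (1 / (1 - τ)) h hn (by ring) (by apply div_nonneg <;> linarith)
      (by rw [div_le_one] <;> linarith)
    have h1 : (1 - τ) ≠ 0 := by linarith
    refine (vec4_congr this ?_ ?_ ?_ ?_ : ![p 0, p 1, p 2, p 3] ∈ Eᶜ) hp <;> field_simp <;> ring
  refine cone_lemma isOpen_interior hab hs.ne (by linarith) hq hQ (key _ (by linarith))
    (key _ (div_neg_of_neg_of_pos hs (by linarith)))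

theorem lemC {E : Set (Fin 4 → ℝ)} (hE : PreciselyMonotone E) {x y u t a b c : ℝ} (s : ℝ)
    (hab : a ^ 2 + b ^ 2 ≠ 0)
    (hq : ![x, y, u, t] ∈ frontier E)
    (hQ : ![x + a, y + b, u + c, t + 2 * (y * a - b * x)] ∈ interior E) :
    (s < 0 → ![x + s * a, y + s * b, u + s * c, t + 2 * (y * (s * a) - s * b * x)]
      ∈ interior Eᶜ) ∧
    (0 < s → ![x + s * a, y + s * b, u + s * c, t + 2 * (y * (s * a) - s * b * x)]
      ∈ interior E) := by
  rw [frontier_eq_closure_inter_closure] at hq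
  have h1 : ∀ s : ℝ, s < 0 → ![x + s * a, y + s * b, u + s * c, t + 2 * (y * (s * a) - s * b * x)]
      ∈ interior Eᶜ := fun s hs => lemA' hE.compl s hab hs hq.2 (by rwa [compl_compl])
  refine ⟨h1 s, fun hs => ?_⟩
  have h2 := lemA' hE (a := -1 * a) (b := -1 * b) (c := -1 * c) (-s)
    (by ring_nf; rwa [add_comm] at hab ⊢) (by linarith) hq.1 (h1 (-1) (by norm_num))
  exact vec4_congr h2 (by ring) (by ring) (by ring) (by ring)

theorem lemD {E : Set (Fin 4 → ℝ)} (hE : PreciselyMonotone E)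
    (h0 : ∀ x y u : ℝ, ![x, y, u, 0] ∈ frontier E) {x y u t x' y' u' t' : ℝ}
    (ht : t ≠ 0) (htt : t' ≠ t) (hr : t' = t + 2 * (y * x' - y' * x))
    (hQ : ![x, y, u, t] ∈ interior E) :
    (t * t' < 0 → ![x', y', u', t'] ∈ interior Eᶜ) ∧
    (0 < t * t' → ![x', y', u', t'] ∈ interior E) := by
  have hd : t - t' ≠ 0 := fun h => htt (by linarith)
  -- displacement from the point on the line at height 0
  have hq := h0 (x - t / (t - t') * (x - x')) (y - t / (t - t') * (y - y'))
    (u - t / (t - t') * (u - u'))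
  have hab : (t / (t - t') * (x - x')) ^ 2 + (t / (t - t') * (y - y')) ^ 2 ≠ 0 := by
    intro h
    have h1 : t / (t - t') * (x - x') = 0 := by nlinarith [sq_nonneg (t / (t - t') * (x - x')), sq_nonneg (t / (t - t') * (y - y'))]
    have h2 : t / (t - t') * (y - y') = 0 := by nlinarith [sq_nonneg (t / (t - t') * (x - x')), sq_nonneg (t / (t - t') * (y - y'))]
    have hne : t / (t - t') ≠ 0 := div_ne_zero ht hd
    have h3 : x - x' = 0 := by simpa [hne] using h1
    have h4 : y - y' = 0 := by simpa [hne] using h2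
    apply htt
    rw [hr, show x' = x by linarith, show y' = y by linarith]; ring
  have hl : t / (t - t') * (t - t') = t := by field_simp
  have hrel : t - t' = 2 * (y' * x - y * x') := by rw [hr]; ring
  set l := t / (t - t') with hldef
  have h4 : 2 * ((y - l * (y - y')) * (l * (x - x')) - l * (y - y') * (x - l * (x - x'))) = t := by
    rw [← hl, hrel]; ring
  have key := lemC hE (c := l * (u - u')) (t' / t) hab hq
    (vec4_congr hQ (by ring) (by ring) (by ring) (by rw [h4]; ring))
  have hs : t' / t * l = l - 1 := by rw [hldef]; field_simp; ring
  have g1 : (x - l * (x - x')) + t' / t * (l * (x - x')) = x' := by linear_combination (x - x') * hs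
  have g2 : (y - l * (y - y')) + t' / t * (l * (y - y')) = y' := by linear_combination (y - y') * hs
  have g3 : (u - l * (u - u')) + t' / t * (l * (u - u')) = u' := by linear_combination (u - u') * hs
  have g4 : 0 + 2 * ((y - l * (y - y')) * (t' / t * (l * (x - x')))
      - t' / t * (l * (y - y')) * (x - l * (x - x'))) = t' := by
    have : t' / t * t = t' := by field_simp
    linear_combination (t' / t) * h4 + this
  rw [g1, g2, g3, g4] at key
  refine ⟨fun h => key.1 ?_, fun h => key.2 ?_⟩
  · rw [show t' / t = t * t' / t ^ 2 by field_simp]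
    exact div_neg_of_neg_of_pos h (by positivity)
  · rw [show t' / t = t * t' / t ^ 2 by field_simp]
    positivity

theorem perturb {O : Set (Fin 4 → ℝ)} (hO : IsOpen O) {x y u t : ℝ} (h : ![x, y, u, t] ∈ O) :
    ∃ x', x' ≠ 0 ∧ ![x', y, u, t] ∈ O := by
  have : Tendsto (fun z : ℝ => (![z, y, u, t] : Fin 4 → ℝ)) (𝓝 x) (𝓝 ![x, y, u, t]) :=
    tendsto_vec4 tendsto_id tendsto_const_nhds tendsto_const_nhds tendsto_const_nhds
  have h1 := (this.eventually_mem (hO.mem_nhds h)).filter_mono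
    (nhdsWithin_le_nhds (s := {x}ᶜ))
  by_cases hx : x = 0
  · obtain ⟨z, hz, hz2⟩ := (h1.and self_mem_nhdsWithin).exists
    exact ⟨z, fun h => hz2 (by simp [h, hx]), hz⟩
  · exact ⟨x, hx, h⟩

theorem lemE1 {E : Set (Fin 4 → ℝ)} (hE : PreciselyMonotone E)
    (h0 : ∀ x y u : ℝ, ![x, y, u, 0] ∈ frontier E) {x y u t x' y' u' t' : ℝ}
    (htt : 0 < t * t') (hdet : x * y' - y * x' ≠ 0)
    (hQ : ![x, y, u, t] ∈ interior E) : ![x', y', u', t'] ∈ interior E := by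
  have ht : t ≠ 0 := by rintro rfl; simp at htt
  have ht' : t' ≠ 0 := by rintro rfl; simp at htt
  have hk : 0 < t * (t + t') := by nlinarith [sq_nonneg t]
  have hk' : 0 < (t + t') * t' := by nlinarith [sq_nonneg t']
  -- solve  y a - x b = t'/2,  y' a - x' b = t/2
  set D := x * y' - y * x' with hD
  have ha : ∃ a b : ℝ, y * a - x * b = t' / 2 ∧ y' * a - x' * b = t / 2 := by
    refine ⟨(x * t / 2 - x' * t' / 2) / D, (y * t / 2 - y' * t' / 2) / D, ?_, ?_⟩
    · field_simp; rw [hD]; ring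
    · field_simp; rw [hD]; ring
  obtain ⟨a, b, e1, e2⟩ := ha
  have hR := (lemD hE h0 (x' := a) (y' := b) (u' := u') (t' := t + t') ht
    (by intro h; apply ht'; linarith) (by linarith) hQ).2 hk
  exact (lemD hE h0 (x' := x') (y' := y') (u' := u') (t' := t') (by rintro h; simp [h] at hk')
    (by intro h; apply ht; linarith) (by linarith) hR).2 hk'

theorem lemE2 {E : Set (Fin 4 → ℝ)} (hE : PreciselyMonotone E)
    (h0 : ∀ x y u : ℝ, ![x, y, u, 0] ∈ frontier E) {x y u t x' y' u' t' : ℝ}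
    (htt : 0 < t * t') (hx : x ≠ 0) (hx' : x' ^ 2 + y' ^ 2 ≠ 0)
    (hQ : ![x, y, u, t] ∈ interior E) : ![x', y', u', t'] ∈ interior E := by
  by_cases hdet : x * y' - y * x' = 0
  · have ht : t ≠ 0 := by rintro rfl; simp at htt
    have h1 := lemE1 hE h0 (x' := -y) (y' := x) (u' := u) (t' := t) (mul_self_pos.2 ht)
      (by have : 0 < x ^ 2 := by positivity
          nlinarith [sq_nonneg y]) hQ
    refine lemE1 hE h0 htt ?_ h1
    intro h
    have e : (x ^ 2 + y ^ 2) * (x' ^ 2 + y' ^ 2) = 0 := by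
      linear_combination (x * y' - y * x') * hdet - (x * x' + y * y') * h
    rcases mul_eq_zero.1 e with e | e
    · have : 0 < x ^ 2 := by positivity
      nlinarith [sq_nonneg y]
    · exact hx' e
  · exact lemE1 hE h0 htt hdet hQ

theorem lemE {E : Set (Fin 4 → ℝ)} (hE : PreciselyMonotone E)
    (h0 : ∀ x y u : ℝ, ![x, y, u, 0] ∈ frontier E) {x y u t x' y' u' t' : ℝ}
    (htt : 0 < t * t')
    (hQ : ![x, y, u, t] ∈ interior E) : ![x', y', u', t'] ∈ interior E := by
  obtain ⟨x1, hx1, hQ1⟩ := perturb isOpen_interior hQ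
  by_cases hx' : x' ^ 2 + y' ^ 2 = 0
  · have ex : x' = 0 := by nlinarith [sq_nonneg x', sq_nonneg y']
    have ey : y' = 0 := by nlinarith [sq_nonneg x', sq_nonneg y']
    subst ex ey
    have h1 : ![1, 0, u', t'] ∈ interior E := lemE2 hE h0 htt hx1 (by norm_num) hQ1
    have h2 : ![-1, 0, u', t'] ∈ interior E := lemE2 hE h0 htt hx1 (by norm_num) hQ1
    have h3 := hconv hE.1 (1 / 2) (interior_subset h1) (interior_subset h2) (by ring)
      (by norm_num) (by norm_num)
    have h3 : ![0, 0, u', t'] ∈ E := vec4_congr h3 (by ring) (by ring) (by ring) (by ring)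
    by_contra hn
    have hf : ![0, 0, u', t'] ∈ frontier E := ⟨subset_closure h3, hn⟩
    have h4 := (lemC hE (a := 1) (b := 0) (c := 0) (-1) (by norm_num) hf
      (vec4_congr h1 (by ring) (by ring) (by ring) (by ring))).1 (by norm_num)
    exact interior_subset h4 (vec4_congr (interior_subset h2) (by ring) (by ring) (by ring) (by ring))
  · exact lemE2 hE h0 htt hx1 hx' hQ1

theorem lemF {E : Set (Fin 4 → ℝ)} (hE : PreciselyMonotone E)
    (h0 : ∀ x y u : ℝ, ![x, y, u, 0] ∈ frontier E) {x y u t x' y' u' t' : ℝ}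
    (ht' : t' ≠ 0) (hz : ![x', y', u', t'] ∈ frontier E) :
    ![x, y, u, t] ∉ interior E := by
  intro hQ
  have ht : t ≠ 0 := by rintro rfl; exact (h0 x y u).2 hQ
  rcases lt_or_gt_of_ne (mul_ne_zero ht ht') with h | h
  · obtain ⟨x1, hx1, hQ1⟩ := perturb isOpen_interior hQ
    have h1 := (lemD hE h0 (x' := 0) (y' := t / x1) (u' := u) (t' := -t) ht
      (by intro h; apply ht; linarith) (by field_simp; ring) hQ1).1
      (by have : 0 < t ^ 2 := by positivity
          nlinarith)
    have h2 := lemE hE.compl (by simpa [frontier_compl] using h0) (x' := x') (y' := y') (u' := u')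
      (t' := t') (by linarith) h1
    rw [← frontier_compl] at hz
    exact hz.2 h2
  · exact hz.2 (lemE hE h0 h hQ)

theorem lemB2 {E : Set (Fin 4 → ℝ)} (hE : PreciselyMonotone E) {ε δ : ℝ} (hδ : δ ≠ 0)
    (hquart : ∀ s w : ℝ, 0 ≤ ε * s → 0 ≤ δ * w → ![s, 0, w, 0] ∈ E)
    {σ₀ α₀ c d yi yj : ℝ} (hyi : 0 < yi) (hij : yi < yj) (hd : d ≠ 0)
    (hε0 : 0 ≤ ε * σ₀) (hεi : 0 ≤ ε * (σ₀ - yi * d / 2)) (hεj : 0 ≤ ε * (σ₀ - yj * d / 2))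
    (Fi0 : ![σ₀ + α₀ * yi, yi, c * yi, -2 * yi * σ₀] ∈ Eᶜ)
    (Fj0 : ![σ₀ + α₀ * yj, yj, c * yj, -2 * yj * σ₀] ∈ Eᶜ)
    (Fi1 : ![(σ₀ - yi * d / 2) + (α₀ + d) * yi, yi, c * yi, -2 * yi * (σ₀ - yi * d / 2)] ∈ Eᶜ)
    (Fj1 : ![(σ₀ - yj * d / 2) + (α₀ + d) * yj, yj, c * yj, -2 * yj * (σ₀ - yj * d / 2)] ∈ Eᶜ) :
    (interior Eᶜ).Nonempty := by
  have C1 : ∀ σ α y u y' u' : ℝ, 0 ≤ ε * σ → 0 < y → y < y' → 0 ≤ δ * (u * y' - u' * y) →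
      ![σ + α * y, y, u, -2 * y * σ] ∈ Eᶜ → ![σ + α * y', y', u', -2 * y' * σ] ∈ Eᶜ := by
    intro σ α y u y' u' hσ hy hyy hu hF hn
    have hyy' : y' - y ≠ 0 := by linarith
    have hy'0 : y' ≠ 0 := by linarith
    have h1 := hquart σ ((u * y' - u' * y) / (y' - y)) hσ (by
      rw [← mul_div_assoc]; exact div_nonneg hu (by linarith))
    have := hconv hE.1 (y / y') h1 hn (by ring) (by apply div_nonneg <;> linarith)
      (by rw [div_le_one] <;> linarith)
    refine hF (vec4_congr this ?_ ?_ ?_ ?_) <;> field_simp <;> ring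
  have C3 : ∀ σ α y u h s : ℝ, 0 ≤ s → s ≤ 1 → ![σ + α * y, y, u, -2 * y * σ] ∈ Eᶜ →
      ![(σ - y * h / 2) + (α + h) * y, y, u, -2 * y * (σ - y * h / 2)] ∈ Eᶜ →
      ![(σ - y * (s * h) / 2) + (α + s * h) * y, y, u, -2 * y * (σ - y * (s * h) / 2)] ∈ Eᶜ := by
    intro σ α y u h s hs0 hs1 h1 h2
    have := hconv hE.2 s h1 h2 (by ring) hs0 hs1
    exact vec4_congr this (by ring) (by ring) (by ring) (by ring)
  have G : ∀ y : ℝ, 0 < y → 0 ≤ ε * (σ₀ - y * d / 2) →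
      ![σ₀ + α₀ * y, y, c * y, -2 * y * σ₀] ∈ Eᶜ →
      ![(σ₀ - y * d / 2) + (α₀ + d) * y, y, c * y, -2 * y * (σ₀ - y * d / 2)] ∈ Eᶜ →
      ∀ κ y' u' : ℝ, 0 ≤ κ → κ ≤ 1 → y < y' → 0 ≤ δ * (c * y' - u') →
      ![(σ₀ - y * (κ * d) / 2) + (α₀ + κ * d) * y', y', u', -2 * y' * (σ₀ - y * (κ * d) / 2)]
        ∈ Eᶜ := by
    intro y hy he F0 F1 κ y' u' hκ0 hκ1 hyy hu
    refine C1 _ _ y (c * y) _ _ ?_ hy hyy ?_ (C3 _ _ _ _ _ _ hκ0 hκ1 F0 F1)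
    · have : ε * (σ₀ - y * (κ * d) / 2) = (1 - κ) * (ε * σ₀) + κ * (ε * (σ₀ - y * d / 2)) := by ring
      rw [this]
      have : 0 ≤ 1 - κ := by linarith
      positivity
    · rw [show δ * (c * y * y' - u' * y) = y * (δ * (c * y' - u')) by ring]
      positivity
  have hyj : 0 < yj := by linarith
  have T : ∀ κ θ y' u' : ℝ, 0 < κ → κ < 1 / 2 → yi * κ < θ → θ < yj * κ → 2 * yj < y' →
      0 < δ * (c * y' - u') →
      ![(σ₀ - θ * d / 2) + (α₀ + κ * d) * y', y', u', -2 * y' * (σ₀ - θ * d / 2)] ∈ Eᶜ := by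
    intro κ θ y' u' hκ0 hκ1 h1 h2 hy hu
    have hdi : 0 < y' - yi := by linarith
    have hdj : 0 < y' - yj := by linarith
    obtain ⟨p, hp⟩ : ∃ p, p = (θ - yi * κ) / (y' - yi) := ⟨_, rfl⟩
    obtain ⟨r, hr⟩ : ∃ r, r = (yj * κ - θ) / (y' - yj) := ⟨_, rfl⟩
    have hp0 : 0 < p := by rw [hp]; apply div_pos <;> linarith
    have hr0 : 0 < r := by rw [hr]; apply div_pos <;> linarith
    have hpe : p * (y' - yi) = θ - yi * κ := by rw [hp]; field_simp
    have hre : r * (y' - yj) = yj * κ - θ := by rw [hr]; field_simp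
    have hpk : p ≤ κ := by
      rw [hp, div_le_iff₀ hdi]; nlinarith
    have hrk : r ≤ κ := by
      rw [hr, div_le_iff₀ hdj]; nlinarith [mul_pos hyi hκ0]
    have a1 := G yi hyi hεi Fi0 Fi1 (κ - p) y' u' (by linarith) (by linarith) (by linarith) hu.le
    have a2 := G yj hyj hεj Fj0 Fj1 (κ + r) y' u' (by linarith) (by linarith) (by linarith) hu.le
    have e1 : σ₀ - yj * ((κ + r) * d) / 2 =
        (σ₀ - yi * ((κ - p) * d) / 2) - y' * ((p + r) * d) / 2 := by
      linear_combination (d / 2) * hpe + (d / 2) * hre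
    have e2 : α₀ + (κ + r) * d = (α₀ + (κ - p) * d) + (p + r) * d := by ring
    rw [e1, e2] at a2
    have hpr : 0 < p + r := by linarith
    have := C3 _ _ _ _ _ (p / (p + r)) (by positivity) (by rw [div_le_one hpr]; linarith) a1 a2
    have e3 : p / (p + r) * ((p + r) * d) = p * d := by field_simp
    rw [e3] at this
    have e4 : σ₀ - yi * ((κ - p) * d) / 2 - y' * (p * d) / 2 = σ₀ - θ * d / 2 := by
      linear_combination (-d / 2) * hpe
    have e5 : α₀ + (κ - p) * d + p * d = α₀ + κ * d := by ring
    rwa [e4, e5] at this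
  -- the center of the ball
  let Y : (Fin 4 → ℝ) → ℝ := fun z => z 1
  let S : (Fin 4 → ℝ) → ℝ := fun z => - z 3 / (2 * z 1)
  let K : (Fin 4 → ℝ) → ℝ := fun z => ((z 0 - S z) / z 1 - α₀) / d
  let Th : (Fin 4 → ℝ) → ℝ := fun z => -2 * (S z - σ₀) / d
  obtain ⟨z, hz⟩ : ∃ z : Fin 4 → ℝ, z = ![(σ₀ - ((yi + yj) / 8) * d / 2) + (α₀ + 1 / 4 * d) * (3 * yj),
    3 * yj, c * (3 * yj) - 1 / δ, -2 * (3 * yj) * (σ₀ - ((yi + yj) / 8) * d / 2)] := ⟨_, rfl⟩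
  have z0 : z 0 = (σ₀ - ((yi + yj) / 8) * d / 2) + (α₀ + 1 / 4 * d) * (3 * yj) := by rw [hz]; rfl
  have z1 : z 1 = 3 * yj := by rw [hz]; rfl
  have z2 : z 2 = c * (3 * yj) - 1 / δ := by rw [hz]; rfl
  have z3 : z 3 = -2 * (3 * yj) * (σ₀ - ((yi + yj) / 8) * d / 2) := by rw [hz]; rfl
  have hz1 : z 1 ≠ 0 := by rw [z1]; positivity
  have eS : S z = σ₀ - ((yi + yj) / 8) * d / 2 := by
    simp only [S]; rw [z3, z1]; field_simp
  have eK : K z = 1 / 4 := by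
    simp only [K, eS]; rw [z0, z1]; field_simp; ring
  have eT : Th z = (yi + yj) / 8 := by
    simp only [Th, eS]; field_simp; ring
  have cc : ∀ i : Fin 4, ContinuousAt (fun w : Fin 4 → ℝ => w i) z := fun i =>
    (continuous_apply i).continuousAt
  have cS : ContinuousAt S z := by
    exact ContinuousAt.div (cc 3).neg ((cc 1).const_mul 2) (by simpa using hz1)
  have cK : ContinuousAt K z := by
    apply ContinuousAt.div_const
    apply ContinuousAt.sub _ continuousAt_const
    exact ContinuousAt.div ((cc 0).sub cS) (cc 1) hz1
  have cT : ContinuousAt Th z := by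
    apply ContinuousAt.div_const
    exact (cS.sub continuousAt_const).const_mul _
  have c1 : ContinuousAt (fun z : Fin 4 → ℝ => z 1) z := cc 1
  have c2 : ContinuousAt (fun z : Fin 4 → ℝ => δ * (c * z 1 - z 2)) z :=
    (((cc 1).const_mul c).sub (cc 2)).const_mul δ
  refine ⟨z, ?_⟩
  rw [mem_interior_iff_mem_nhds]
  filter_upwards [continuousAt_const.eventually_lt cK (show 0 < K z by rw [eK]; norm_num),
    cK.eventually_lt continuousAt_const (show K z < 1 / 2 by rw [eK]; norm_num),
    (cK.const_mul yi).eventually_lt cT (show yi * K z < Th z by rw [eK, eT]; linarith),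
    cT.eventually_lt (cK.const_mul yj) (show Th z < yj * K z by rw [eK, eT]; linarith),
    continuousAt_const.eventually_lt c1 (show 2 * yj < z 1 by rw [z1]; linarith),
    continuousAt_const.eventually_lt c2 (show 0 < δ * (c * z 1 - z 2) by
      rw [z1, z2]
      have : δ * (c * (3 * yj) - (c * (3 * yj) - 1 / δ)) = 1 := by field_simp; ring
      rw [this]; norm_num)] with w h1 h2 h3 h4 h5 h6
  have hw := T (K w) (Th w) (w 1) (w 2) h1 h2 h3 h4 h5 h6
  have hw1 : w 1 ≠ 0 := by linarith
  have f1 : σ₀ - Th w * d / 2 = S w := by simp only [Th]; field_simp; ring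
  have f2 : α₀ + K w * d = (w 0 - S w) / w 1 := by simp only [K]; field_simp; ring
  rw [f1, f2] at hw
  rw [vec4_eta w]
  refine vec4_congr hw ?_ rfl rfl ?_
  · field_simp; ring
  · simp only [S]; field_simp

theorem lemB {E : Set (Fin 4 → ℝ)} (hE : PreciselyMonotone E) (h00 : ![0, 0, 0, 0] ∈ E)
    (hd : Dense Eᶜ) : (interior Eᶜ).Nonempty := by
  have hx : ∃ ε : ℝ, ε ≠ 0 ∧ ∀ s : ℝ, 0 ≤ ε * s → ![s, 0, 0, 0] ∈ E := by
    by_contra hcon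
    push Not at hcon
    obtain ⟨s, hs, hsE⟩ := hcon 1 one_ne_zero
    obtain ⟨r, hr, hrE⟩ := hcon (-1) (by norm_num)
    have hs0 : s ≠ 0 := by rintro rfl; exact hsE h00
    have hs0 : 0 < s := lt_of_le_of_ne (by linarith) hs0.symm
    have hsr : s - r ≠ 0 := by linarith
    have := hconv hE.2 (s / (s - r)) hsE hrE (by ring) (by apply div_nonneg <;> linarith)
      (by rw [div_le_one] <;> linarith)
    refine (vec4_congr this ?_ ?_ ?_ ?_ : ![0, 0, 0, 0] ∈ Eᶜ) h00 <;> field_simp <;> ring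
  have hu : ∃ ε : ℝ, ε ≠ 0 ∧ ∀ s : ℝ, 0 ≤ ε * s → ![0, 0, s, 0] ∈ E := by
    by_contra hcon
    push Not at hcon
    obtain ⟨s, hs, hsE⟩ := hcon 1 one_ne_zero
    obtain ⟨r, hr, hrE⟩ := hcon (-1) (by norm_num)
    have hs0 : s ≠ 0 := by rintro rfl; exact hsE h00
    have hs0 : 0 < s := lt_of_le_of_ne (by linarith) hs0.symm
    have hsr : s - r ≠ 0 := by linarith
    have := hconv hE.2 (s / (s - r)) hsE hrE (by ring) (by apply div_nonneg <;> linarith)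
      (by rw [div_le_one] <;> linarith)
    refine (vec4_congr this ?_ ?_ ?_ ?_ : ![0, 0, 0, 0] ∈ Eᶜ) h00 <;> field_simp <;> ring
  obtain ⟨ε, hε, hx⟩ := hx
  obtain ⟨δ, hδ, hu⟩ := hu
  have hquart : ∀ s w : ℝ, 0 ≤ ε * s → 0 ≤ δ * w → ![s, 0, w, 0] ∈ E := by
    intro s w hs hw
    have := hconv hE.1 (1 / 2) (hx (2 * s) (by linarith)) (hu (2 * w) (by linarith)) (by ring)
      (by norm_num) (by norm_num)
    exact vec4_congr this (by ring) (by ring) (by ring) (by ring)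
  have hop : IsOpen {z : Fin 4 → ℝ | 0 < z 1 ∧ 0 < - ε * z 3} := by
    apply IsOpen.inter
    · exact isOpen_lt continuous_const (continuous_apply 1)
    · exact isOpen_lt continuous_const (continuous_const.mul (continuous_apply 3))
  obtain ⟨q, hq, hqE⟩ := hd.inter_open_nonempty _ hop ⟨![0, 1, 0, -ε], by
    refine ⟨by simp, ?_⟩
    simp only [Matrix.cons_val]
    have : 0 < ε ^ 2 := by positivity
    nlinarith⟩
  obtain ⟨hy, ht⟩ := hq
  rw [vec4_eta q] at hqE
  generalize q 0 = x0 at *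
  generalize q 1 = y0 at *
  generalize q 2 = u0 at *
  generalize q 3 = t0 at *
  obtain ⟨σ, hσ⟩ : ∃ σ, σ = - t0 / (2 * y0) := ⟨_, rfl⟩
  obtain ⟨α, hα⟩ : ∃ α, α = (x0 - σ) / y0 := ⟨_, rfl⟩
  obtain ⟨c, hc⟩ : ∃ c, c = u0 / y0 := ⟨_, rfl⟩
  have hεσ : 0 < ε * σ := by
    rw [hσ, show ε * (-t0 / (2 * y0)) = (-ε * t0) / (2 * y0) by ring]
    positivity
  have hF0 : ![σ + α * y0, y0, c * y0, -2 * y0 * σ] ∈ Eᶜ := by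
    refine vec4_congr hqE ?_ rfl ?_ ?_
    · rw [hα]; field_simp; ring
    · rw [hc]; field_simp
    · rw [hσ]; field_simp
  have C1 : ∀ y' : ℝ, y0 < y' → ![σ + α * y', y', c * y', -2 * y' * σ] ∈ Eᶜ := by
    intro y' hyy hn
    have hy'0 : y' ≠ 0 := by linarith
    have h1 := hquart σ 0 hεσ.le (by simp)
    have := hconv hE.1 (y0 / y') h1 hn (by ring) (by apply div_nonneg <;> linarith)
      (by rw [div_le_one] <;> linarith)
    refine hF0 (vec4_congr this ?_ ?_ ?_ ?_) <;> field_simp <;> ring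
  obtain ⟨d, hdd⟩ : ∃ d, d = σ / (4 * y0) := ⟨_, rfl⟩
  have hσ0 : σ ≠ 0 := by rintro rfl; simp at hεσ
  have hd0 : d ≠ 0 := by rw [hdd]; positivity
  have C2 : ∀ y' : ℝ, y0 < y' →
      ![(σ - y' * d / 2) + (α + d) * y', y', c * y', -2 * y' * (σ - y' * d / 2)] ∈ Eᶜ ∨
      ![(σ - y' * (-d) / 2) + (α + (-d)) * y', y', c * y', -2 * y' * (σ - y' * (-d) / 2)] ∈ Eᶜ := by
    intro y' hyy
    by_contra hcon
    push Not at hcon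
    obtain ⟨h1, h2⟩ := hcon
    rw [notMem_compl_iff] at h1 h2
    have := hconv hE.1 (1 / 2) h1 h2 (by ring) (by norm_num) (by norm_num)
    exact C1 y' hyy (vec4_congr this (by ring) (by ring) (by ring) (by ring))
  have hpos : ∀ k : ℝ, -4 ≤ k → k ≤ 4 → 0 ≤ ε * (σ - k * y0 * d / 2) := by
    intro k hk1 hk2
    have : ε * (σ - k * y0 * d / 2) = (ε * σ) * (1 - k / 8) := by
      rw [hdd]; field_simp; ring
    rw [this]
    apply mul_nonneg hεσ.le; linarith
  have fin : ∀ i j e : ℝ, 1 < i → i < j → j ≤ 4 → (e = d ∨ e = -d) →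
      ![(σ - (i * y0) * e / 2) + (α + e) * (i * y0), (i * y0), c * (i * y0), -2 * (i * y0) * (σ - (i * y0) * e / 2)] ∈ Eᶜ →
      ![(σ - (j * y0) * e / 2) + (α + e) * (j * y0), (j * y0), c * (j * y0), -2 * (j * y0) * (σ - (j * y0) * e / 2)] ∈ Eᶜ →
      (interior Eᶜ).Nonempty := by
    intro i j e hi hij hj he h1 h2
    have hp : ∀ k : ℝ, 1 < k → k ≤ 4 → 0 ≤ ε * (σ - k * y0 * e / 2) := by
      intro k hk1 hk2
      rcases he with rfl | rfl
      · exact hpos k (by linarith) hk2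
      · have := hpos (-k) (by linarith) (by linarith)
        rwa [show -k * y0 * d = k * y0 * -d by ring] at this
    exact lemB2 hE hδ hquart (by positivity) (by nlinarith)
      (by rcases he with rfl | rfl
          · exact hd0
          · exact neg_ne_zero.2 hd0) hεσ.le (hp i hi (by linarith)) (hp j (by linarith) hj)
      (C1 _ (by nlinarith)) (C1 _ (by nlinarith)) h1 h2
  rcases C2 (2 * y0) (by linarith) with h2 | h2 <;>
  rcases C2 (3 * y0) (by linarith) with h3 | h3 <;>
  rcases C2 (4 * y0) (by linarith) with h4 | h4
  · exact fin 2 3 _ (by norm_num) (by norm_num) (by norm_num) (by simp) h2 h3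
  · exact fin 2 3 _ (by norm_num) (by norm_num) (by norm_num) (by simp) h2 h3
  · exact fin 2 4 _ (by norm_num) (by norm_num) (by norm_num) (by simp) h2 h4
  · exact fin 3 4 _ (by norm_num) (by norm_num) (by norm_num) (by simp) h3 h4
  · exact fin 3 4 _ (by norm_num) (by norm_num) (by norm_num) (by simp) h3 h4
  · exact fin 2 4 _ (by norm_num) (by norm_num) (by norm_num) (by simp) h2 h4
  · exact fin 2 3 _ (by norm_num) (by norm_num) (by norm_num) (by simp) h2 h3
  · exact fin 2 3 _ (by norm_num) (by norm_num) (by norm_num) (by simp) h2 h3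

theorem main0 {E : Set (Fin 4 → ℝ)} (hE : PreciselyMonotone E)
    (h0 : ∀ x y u : ℝ, ![x, y, u, 0] ∈ frontier E) {z : Fin 4 → ℝ} (hz : z ∈ frontier E) :
    z 3 = 0 := by
  by_contra ht
  have hz' := hz
  rw [vec4_eta z] at hz
  have i1 : interior E = ∅ := by
    ext w
    rw [vec4_eta w]
    simpa using lemF hE h0 ht hz
  have i2 : interior Eᶜ = ∅ := by
    ext w
    rw [vec4_eta w]
    simpa using lemF hE.compl (by simpa [frontier_compl] using h0) ht
      (by rw [frontier_compl]; exact hz)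
  by_cases h : ![0, 0, 0, 0] ∈ E
  · have := lemB hE h (interior_eq_empty_iff_dense_compl.1 i1)
    simp [i2] at this
  · have := lemB hE.compl h (interior_eq_empty_iff_dense_compl.1 i2)
    simp [i1] at this

theorem hmul_assoc4 (p q r : Fin 4 → ℝ) : hmul (hmul p q) r = hmul p (hmul q r) := by
  ext i; fin_cases i <;> simp [hmul] <;> ring

theorem hmul_neg_left (p q : Fin 4 → ℝ) : hmul (-p) (hmul p q) = q := by
  ext i; fin_cases i <;> simp [hmul]; ring

theorem hmul_neg_left' (p q : Fin 4 → ℝ) : hmul p (hmul (-p) q) = q := by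
  ext i; fin_cases i <;> simp [hmul]; ring

theorem continuous_hmul (p : Fin 4 → ℝ) : Continuous (hmul p) := by
  apply continuous_pi
  intro i
  fin_cases i <;> simp [hmul] <;> fun_prop

/-- Left translation as a homeomorphism. -/
def leftTrans (p : Fin 4 → ℝ) : (Fin 4 → ℝ) ≃ₜ (Fin 4 → ℝ) where
  toFun := hmul p
  invFun := hmul (-p)
  left_inv := hmul_neg_left p
  right_inv := hmul_neg_left' p
  continuous_toFun := continuous_hmul p
  continuous_invFun := continuous_hmul (-p)

theorem HRConvex.trans {C : Set (Fin 4 → ℝ)} (hC : HRConvex C) (P : Fin 4 → ℝ) :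
    HRConvex (leftTrans P ⁻¹' C) := by
  intro p hp a b c h s hs0 hs1
  have h : hmul P (hmul p ![a, b, c, 0]) ∈ C := h
  show hmul P (hmul p ![s * a, s * b, s * c, 0]) ∈ C
  rw [← hmul_assoc4] at h ⊢
  exact hC _ hp a b c h s hs0 hs1

/-- If the horizontal plane `H_P = {P·(a,b,c,0)}` at a point `P` is contained in the
boundary of a precisely monotone set `E ⊆ ℍ×ℝ`, then `∂E = H_P`. -/
theorem monotone_boundary_horizontal_plane
    (E : Set (Fin 4 → ℝ)) (hE : PreciselyMonotone E) (P : Fin 4 → ℝ)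
    (hH : {q : Fin 4 → ℝ | ∃ a b c : ℝ, q = hmul P ![a, b, c, 0]} ⊆ frontier E) :
    frontier E = {q : Fin 4 → ℝ | ∃ a b c : ℝ, q = hmul P ![a, b, c, 0]} := by
  refine Subset.antisymm ?_ hH
  intro q hq
  have hE' : PreciselyMonotone (leftTrans P ⁻¹' E) := ⟨hE.1.trans P, hE.2.trans P⟩
  have hf := (leftTrans P).preimage_frontier E
  have hq' : hmul (-P) q ∈ frontier (leftTrans P ⁻¹' E) := by
    rw [← hf]
    show hmul P (hmul (-P) q) ∈ frontier E
    rwa [hmul_neg_left']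
  have h3 := main0 hE' (fun x y u => by
    rw [← hf]
    exact hH ⟨x, y, u, rfl⟩) hq'
  refine ⟨hmul (-P) q 0, hmul (-P) q 1, hmul (-P) q 2, ?_⟩
  rw [← h3, ← vec4_eta, hmul_neg_left']
end
end

section
/- Let E ⊆ ℝ⁴ = ℍ×ℝ be precisely monotone with E ≠ ∅ and E ≠ ℝ⁴, and suppose the origin (0,0,0,0) ∈ ∂E. Then at least one of the following holds: (i) ∂E = {(x,y,u,0) : (x,y,u) ∈ ℝ³}; (ii) the point (0,0,1,0) belongs to Int(E) ∪ Int(ℝ⁴∖E); (iii) there exists (a,b) ≠ (0,0) in ℝ² such that the point (a,b,0,0) belongs to Int(E) ∪ Int(ℝ⁴∖E). -/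
/- The group `ℍ×ℝ`: `ℝ⁴` with coordinates `(x,y,u,t)` and law
`(x,y,u,t)·(x',y',u',t') = (x+x', y+y', u+u', t+t'+2(yx'−y'x))`. -/

noncomputable section

def H3 (C : Set (ℝ × ℝ × ℝ)) : Prop :=
  ∀ x y t x' y' t' l : ℝ, (x, y, t) ∈ C → (x', y', t') ∈ C → t' = t + 2 * (y * x' - x * y') →
    0 ≤ l → l ≤ 1 → (x + l * (x' - x), y + l * (y' - y), t + l * (t' - t)) ∈ C

def gmap (x0 y0 t0 α β γ δ : ℝ) (p : ℝ × ℝ × ℝ) : ℝ × ℝ × ℝ :=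
  (x0 + α * p.1 + β * p.2.1, y0 + γ * p.1 + δ * p.2.1,
   t0 + (α * δ - β * γ) * p.2.2 + 2 * (y0 * (α * p.1 + β * p.2.1) - x0 * (γ * p.1 + δ * p.2.1)))

lemma H3.pre {C : Set (ℝ × ℝ × ℝ)} (h : H3 C) (x0 y0 t0 α β γ δ : ℝ) :
    H3 (gmap x0 y0 t0 α β γ δ ⁻¹' C) := by
  intro x y t x' y' t' l h1 h2 h3 h4 h5
  have := h _ _ _ _ _ _ l h1 h2 (by simp only []; rw [h3]; ring) h4 h5
  simp only [Set.mem_preimage, gmap] at *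
  convert this using 2
  · ring
  · congr 1 <;> ring

lemma int_pre {C : Set (ℝ × ℝ × ℝ)} (x0 y0 t0 α β γ δ : ℝ) (hk : α * δ - β * γ ≠ 0)
    (h : (interior (gmap x0 y0 t0 α β γ δ ⁻¹' C)).Nonempty) : (interior C).Nonempty := by
  obtain ⟨p, hp⟩ := h
  let k := α * δ - β * γ
  let f : ℝ × ℝ × ℝ → ℝ × ℝ × ℝ := fun P =>
    ((δ * (P.1 - x0) - β * (P.2.1 - y0)) / k, (-γ * (P.1 - x0) + α * (P.2.1 - y0)) / k,
      (P.2.2 - t0 - 2 * (y0 * (P.1 - x0) - x0 * (P.2.1 - y0))) / k)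
  have hk' : k ≠ 0 := hk
  have hf : Continuous f := by fun_prop
  have hgf : ∀ P, gmap x0 y0 t0 α β γ δ (f P) = P := by
    rintro ⟨X, Y, T⟩
    simp only [gmap, f, Prod.mk.injEq]
    refine ⟨?_, ?_, ?_⟩ <;> field_simp <;> simp only [k] <;> ring
  have hfg : ∀ P, f (gmap x0 y0 t0 α β γ δ P) = P := by
    rintro ⟨X, Y, T⟩
    simp only [gmap, f, Prod.mk.injEq]
    refine ⟨?_, ?_, ?_⟩ <;> field_simp <;> simp only [k] <;> ring
  refine ⟨gmap x0 y0 t0 α β γ δ p, ?_⟩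
  rw [mem_interior]
  refine ⟨f ⁻¹' interior (gmap x0 y0 t0 α β γ δ ⁻¹' C), ?_, isOpen_interior.preimage hf, ?_⟩
  · intro P hP
    have := interior_subset hP
    rw [Set.mem_preimage, hgf] at this
    exact this
  · rw [Set.mem_preimage, hfg]; exact hp

lemma ray3 {C : Set (ℝ × ℝ × ℝ)} (h' : H3 Cᶜ) (x y t a b : ℝ) (hp : (x, y, t) ∈ C) :
    (∀ s : ℝ, 0 ≤ s → (x + s * a, y + s * b, t + 2 * s * (y * a - x * b)) ∈ C) ∨
    (∀ s : ℝ, s ≤ 0 → (x + s * a, y + s * b, t + 2 * s * (y * a - x * b)) ∈ C) := by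
  by_contra hcon
  push Not at hcon
  obtain ⟨⟨s1, hs1, h1⟩, ⟨s2, hs2, h2⟩⟩ := hcon
  have hne : s1 ≠ 0 := by
    rintro rfl
    apply h1; simpa using hp
  have hpos : 0 < s1 - s2 := by
    have := lt_of_le_of_ne hs1 hne.symm
    linarith
  have := h' _ _ _ _ _ _ (-s2 / (s1 - s2)) h2 h1 (by ring) (by apply div_nonneg <;> linarith)
    (by rw [div_le_one hpos]; linarith)
  apply this
  convert hp using 2
  · field_simp; ring
  · congr 1 <;> field_simp <;> ring

lemma coreM1 {C : Set (ℝ × ℝ × ℝ)} (h : H3 C)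
    (h1 : ∀ σ : ℝ, 0 ≤ σ → (-1, σ, 2 * σ) ∈ C) (h2 : ∀ σ : ℝ, 0 ≤ σ → (1, -σ, 2 * σ) ∈ C)
    (h3 : ∀ y : ℝ, 0 ≤ y → ((0 : ℝ), y, (0 : ℝ)) ∈ C) : (interior C).Nonempty := by
  have hS : ∀ l σ : ℝ, -1 ≤ l → l ≤ 1 → 0 ≤ σ → (l, -(l * σ), 2 * σ) ∈ C := by
    intro l σ hl hl' hσ
    have := h _ _ _ _ _ _ ((l + 1) / 2) (h1 σ hσ) (h2 σ hσ) (by ring) (by linarith) (by linarith)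
    convert this using 2
    · ring
    · congr 1 <;> ring
  let O : Set (ℝ × ℝ × ℝ) := {p | 0 < p.1 ∧ p.1 < 1 ∧ 0 < p.2.2 ∧
    -p.1 ^ 2 * p.2.2 < 2 * p.1 * p.2.1 ∧ 2 * p.1 * p.2.1 < (1 - 2 * p.1) * p.2.2}
  have hO : IsOpen O := by
    refine IsOpen.and (isOpen_lt (by fun_prop) (by fun_prop)) <| IsOpen.and (isOpen_lt (by fun_prop) (by fun_prop)) <|
      IsOpen.and (isOpen_lt (by fun_prop) (by fun_prop)) <| IsOpen.and (isOpen_lt (by fun_prop) (by fun_prop)) (isOpen_lt (by fun_prop) (by fun_prop))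
  have hOC : O ⊆ C := by
    rintro ⟨x, y, t⟩ ⟨hx, hx1, ht, hy, hy'⟩
    simp only at hx hx1 ht hy hy'
    set r := 2 * x * y / t with hr
    have hr1 : -x ^ 2 ≤ r := by rw [hr, le_div_iff₀ ht]; linarith
    have hr2 : r ≤ 1 - 2 * x := by rw [hr, div_le_iff₀ ht]; linarith
    have hcont : ContinuousOn (fun m : ℝ => 1 - m - x ^ 2 / m) (Set.Icc x 1) := by
      apply ContinuousOn.sub (by fun_prop)
      apply ContinuousOn.div (by fun_prop) (by fun_prop)
      intro m hm; have := hm.1; linarith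
    have := intermediate_value_Icc' hx1.le hcont
    have hmem : r ∈ Set.Icc ((fun m : ℝ => 1 - m - x ^ 2 / m) 1) ((fun m : ℝ => 1 - m - x ^ 2 / m) x) := by
      constructor
      · simp only; linarith
      · simp only
        have : x ^ 2 / x = x := by field_simp
        rw [this]; linarith
    obtain ⟨m, ⟨hm1, hm2⟩, hm⟩ := this hmem
    simp only at hm
    have hm0 : 0 < m := by linarith
    have hc : 0 < t / (2 * x) := by positivity
    have hl : x / m ≤ 1 := by rw [div_le_one hm0]; exact hm1
    have hl0 : 0 < x / m := by positivity
    have e1 := h3 (t / (2 * x)) hc.le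
    have e2 := hS (x / m) (t / (2 * x) * (x / m)) (by linarith) hl (by positivity)
    have := h _ _ _ _ _ _ m e1 e2 (by ring) hm0.le hm2
    convert this using 2
    · field_simp; ring
    · have hy : y = t / (2 * x) * (1 - m - x ^ 2 / m) := by
        rw [hm, hr]; field_simp
      congr 1
      · rw [hy]; field_simp; ring
      · field_simp; ring
  refine ⟨(1/2, 0, 1) + (0, -1/8, 0), mem_interior.2 ⟨O, hOC, hO, ?_⟩⟩
  norm_num [O]

lemma coreM {C : Set (ℝ × ℝ × ℝ)} (h : H3 C)
    (h1 : ∀ σ : ℝ, 0 ≤ σ → (-1, σ, 2 * σ) ∈ C) (h2 : ∀ σ : ℝ, 0 ≤ σ → (1, -σ, 2 * σ) ∈ C)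
    (h3 : (∀ y : ℝ, 0 ≤ y → ((0 : ℝ), y, (0 : ℝ)) ∈ C) ∨
      (∀ y : ℝ, y ≤ 0 → ((0 : ℝ), y, (0 : ℝ)) ∈ C)) : (interior C).Nonempty := by
  rcases h3 with h3 | h3
  · exact coreM1 h h1 h2 h3
  · apply int_pre 0 0 0 (-1) 0 0 (-1) (by norm_num)
    apply coreM1 (h.pre _ _ _ _ _ _ _)
    · intro σ hσ
      have := h2 σ hσ
      simpa [gmap] using this
    · intro σ hσ
      have := h1 σ hσ
      simpa [gmap] using this
    · intro σ hσ
      have := h3 (-σ) (by linarith)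
      simpa [gmap] using this

lemma coreUU {C : Set (ℝ × ℝ × ℝ)} (h : H3 C) (a a' : ℝ) (haa : a < a')
    (h1 : ∀ s σ : ℝ, 0 ≤ s → 0 ≤ σ → (s + a * σ, σ, -2 * s * σ) ∈ C)
    (h2 : ∀ s σ : ℝ, 0 ≤ s → 0 ≤ σ → (s + a' * σ, σ, -2 * s * σ) ∈ C) :
    (interior C).Nonempty := by
  obtain ⟨d, rfl⟩ : ∃ d, a' = a + d := ⟨a' - a, by ring⟩
  have hd : 0 < d := by linarith
  let O : Set (ℝ × ℝ × ℝ) := {p | 0 < p.2.1 ∧ 0 < p.2.2 + 2 * (p.1 - a * p.2.1) * p.2.1 ∧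
    p.2.2 + 2 * (p.1 - a * p.2.1) * p.2.1 < 2 * d * p.2.1 ^ 2 ∧ 0 < p.1 - a * p.2.1 - d * p.2.1}
  have hO : IsOpen O := by
    refine IsOpen.and (isOpen_lt (by fun_prop) (by fun_prop)) <| IsOpen.and (isOpen_lt (by fun_prop) (by fun_prop)) <|
      IsOpen.and (isOpen_lt (by fun_prop) (by fun_prop)) (isOpen_lt (by fun_prop) (by fun_prop))
  have hOC : O ⊆ C := by
    rintro ⟨x, y, t⟩ ⟨hy, ht, ht', hx⟩
    simp only at hy ht ht' hx
    obtain ⟨l, hl⟩ : ∃ l, l = (t + 2 * (x - a * y) * y) / (2 * d * y ^ 2) := ⟨_, rfl⟩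
    have hl0 : 0 ≤ l := by rw [hl]; positivity
    have hl1 : l ≤ 1 := by rw [hl, div_le_one (by positivity)]; exact ht'.le
    have hld : t = l * (2 * d * y ^ 2) - 2 * (x - a * y) * y := by rw [hl]; field_simp; ring
    have hdy : 0 < d * y := by positivity
    have hldy : l * (d * y) ≤ 1 * (d * y) := by gcongr
    have hldy0 : 0 ≤ l * (d * y) := by positivity
    have e1 := h1 (x - a * y - l * d * y / 2) y (by nlinarith) hy.le
    have e2 := h2 (x - a * y - l * d * y / 2 - d * y / 2) y (by nlinarith) hy.le
    have := h _ _ _ _ _ _ l e1 e2 (by ring) hl0 hl1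
    convert this using 2
    · ring
    · congr 1
      · ring
      · rw [hld]; ring
  refine ⟨(a + d + 1, 1, -2 * (d + 1) + d), mem_interior.2 ⟨O, hOC, hO, ?_⟩⟩
  refine ⟨?_, ?_, ?_, ?_⟩ <;> simp <;> linarith

lemma coreDD {C : Set (ℝ × ℝ × ℝ)} (h : H3 C) (a a' : ℝ) (haa : a < a')
    (h1 : ∀ s σ : ℝ, 0 ≤ s → σ ≤ 0 → (s + a * σ, σ, -2 * s * σ) ∈ C)
    (h2 : ∀ s σ : ℝ, 0 ≤ s → σ ≤ 0 → (s + a' * σ, σ, -2 * s * σ) ∈ C) :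
    (interior C).Nonempty := by
  apply int_pre 0 0 0 1 0 0 (-1) (by norm_num)
  apply coreUU (h.pre _ _ _ _ _ _ _) (-a') (-a) (by linarith)
  · intro s σ hs hσ
    have := h2 s (-σ) hs (by linarith)
    simpa [gmap] using this
  · intro s σ hs hσ
    have := h1 s (-σ) hs (by linarith)
    simpa [gmap] using this

lemma coreType {C : Set (ℝ × ℝ × ℝ)} (h : H3 C) (h' : H3 Cᶜ)
    (hr : ∀ s : ℝ, 0 ≤ s → (s, (0 : ℝ), (0 : ℝ)) ∈ C) (a : ℝ) :
    (interior C).Nonempty ∨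
    (∀ s σ : ℝ, 0 ≤ s → 0 ≤ σ → (s + a * σ, σ, -2 * s * σ) ∈ C) ∨
    (∀ s σ : ℝ, 0 ≤ s → σ ≤ 0 → (s + a * σ, σ, -2 * s * σ) ∈ C) := by
  have hray : ∀ s : ℝ, 0 ≤ s → (∀ σ : ℝ, 0 ≤ σ → (s + a * σ, σ, -2 * s * σ) ∈ C) ∨
      (∀ σ : ℝ, σ ≤ 0 → (s + a * σ, σ, -2 * s * σ) ∈ C) := by
    intro s hs
    rcases ray3 h' s 0 0 a 1 (hr s hs) with hh | hh
    · left
      intro σ hσ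
      convert hh σ hσ using 2
      · ring
      · congr 1 <;> ring
    · right
      intro σ hσ
      convert hh σ hσ using 2
      · ring
      · congr 1 <;> ring
  by_cases hM : ∃ s1 s2 : ℝ, 0 ≤ s1 ∧ 0 ≤ s2 ∧ s1 ≠ s2 ∧
    (∀ σ : ℝ, 0 ≤ σ → (s1 + a * σ, σ, -2 * s1 * σ) ∈ C) ∧
    (∀ σ : ℝ, σ ≤ 0 → (s2 + a * σ, σ, -2 * s2 * σ) ∈ C)
  · left
    obtain ⟨s1, s2, hs1, hs2, hne, hu, hd⟩ := hM
    apply int_pre ((s1 + s2) / 2) 0 0 ((s2 - s1) / 2) a 0 1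
      (by intro h0; apply hne; linarith)
    apply coreM (h.pre _ _ _ _ _ _ _)
    · intro σ hσ
      have := hu σ hσ
      rw [Set.mem_preimage]
      convert this using 1
      simp only [gmap, Prod.mk.injEq]
      refine ⟨?_, ?_, ?_⟩ <;> ring
    · intro σ hσ
      have := hd (-σ) (by linarith)
      rw [Set.mem_preimage]
      convert this using 1
      simp only [gmap, Prod.mk.injEq]
      refine ⟨?_, ?_, ?_⟩ <;> ring
    · rcases hray ((s1 + s2) / 2) (by linarith) with hh | hh
      · left
        intro σ hσ
        have := hh σ hσ
        rw [Set.mem_preimage]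
        convert this using 1
        simp only [gmap, Prod.mk.injEq]
        refine ⟨?_, ?_, ?_⟩ <;> ring
      · right
        intro σ hσ
        have := hh σ hσ
        rw [Set.mem_preimage]
        convert this using 1
        simp only [gmap, Prod.mk.injEq]
        refine ⟨?_, ?_, ?_⟩ <;> ring
  · right
    by_cases hU : ∃ s0 : ℝ, 0 ≤ s0 ∧ ∀ σ : ℝ, 0 ≤ σ → (s0 + a * σ, σ, -2 * s0 * σ) ∈ C
    · obtain ⟨s0, hs0, hu⟩ := hU
      left
      intro s σ hs hσ
      by_cases hss : s0 = s
      · subst hss; exact hu σ hσ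
      · rcases hray s hs with hh | hh
        · exact hh σ hσ
        · exact absurd ⟨s0, s, hs0, hs, hss, hu, hh⟩ hM
    · right
      intro s σ hs hσ
      rcases hray s hs with hh | hh
      · exact absurd ⟨s, hs, hh⟩ hU
      · exact hh σ hσ

lemma core_ray {C : Set (ℝ × ℝ × ℝ)} (h : H3 C) (h' : H3 Cᶜ)
    (hr : ∀ s : ℝ, 0 ≤ s → (s, (0 : ℝ), (0 : ℝ)) ∈ C) : (interior C).Nonempty := by
  rcases coreType h h' hr 0 with h0 | h0 | h0
  · exact h0
  · rcases coreType h h' hr 1 with h1 | h1 | h1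
    · exact h1
    · exact coreUU h 0 1 (by norm_num) h0 h1
    · rcases coreType h h' hr 2 with h2 | h2 | h2
      · exact h2
      · exact coreUU h 0 2 (by norm_num) h0 h2
      · exact coreDD h 1 2 (by norm_num) h1 h2
  · rcases coreType h h' hr 1 with h1 | h1 | h1
    · exact h1
    · rcases coreType h h' hr 2 with h2 | h2 | h2
      · exact h2
      · exact coreUU h 1 2 (by norm_num) h1 h2
      · exact coreDD h 0 2 (by norm_num) h0 h2
    · exact coreDD h 0 1 (by norm_num) h0 h1

lemma core_int {C : Set (ℝ × ℝ × ℝ)} (h : H3 C) (h' : H3 Cᶜ) (hne : C.Nonempty) :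
    (interior C).Nonempty := by
  obtain ⟨⟨x, y, t⟩, hp⟩ := hne
  rcases ray3 h' x y t 1 0 hp with hh | hh
  · apply int_pre x y t 1 0 0 1 (by norm_num)
    apply core_ray (h.pre _ _ _ _ _ _ _) (h'.pre _ _ _ _ _ _ _)
    intro s hs
    rw [Set.mem_preimage]
    convert hh s hs using 1
    simp only [gmap, Prod.mk.injEq]
    refine ⟨?_, ?_, ?_⟩ <;> ring
  · apply int_pre x y t (-1) 0 0 (-1) (by norm_num)
    apply core_ray (h.pre _ _ _ _ _ _ _) (h'.pre _ _ _ _ _ _ _)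
    intro s hs
    rw [Set.mem_preimage]
    convert hh (-s) (by linarith) using 1
    simp only [gmap, Prod.mk.injEq]
    refine ⟨?_, ?_, ?_⟩ <;> ring

def Hor (p q : Fin 4 → ℝ) : Prop := q 3 = p 3 + 2 * (p 1 * q 0 - p 0 * q 1)

def lin (p q : Fin 4 → ℝ) (l : ℝ) : Fin 4 → ℝ := fun i => p i + l * (q i - p i)

lemma Hor.symm {p q : Fin 4 → ℝ} (h : Hor p q) : Hor q p := by
  unfold Hor at *; rw [h]; ring

lemma Hor.lin {p q : Fin 4 → ℝ} (h : Hor p q) (l l' : ℝ) : Hor (lin p q l) (lin p q l') := by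
  unfold Hor _root_.lin at *; rw [h]; ring

lemma lin_zero (p q : Fin 4 → ℝ) : lin p q 0 = p := by
  ext i; simp [lin]

lemma lin_one (p q : Fin 4 → ℝ) : lin p q 1 = q := by
  ext i; simp [lin]

lemma conv4 {E : Set (Fin 4 → ℝ)} (hE : HRConvex E) {p q : Fin 4 → ℝ} (hp : p ∈ E) (hq : q ∈ E)
    (h : Hor p q) {l : ℝ} (hl : 0 ≤ l) (hl1 : l ≤ 1) : lin p q l ∈ E := by
  have h1 : hmul p ![q 0 - p 0, q 1 - p 1, q 2 - p 2, 0] = q := by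
    unfold Hor at h
    ext i; fin_cases i <;> simp [hmul]
    rw [h]; ring
  have := hE p hp (q 0 - p 0) (q 1 - p 1) (q 2 - p 2) (by rw [h1]; exact hq) l hl hl1
  convert this using 1
  unfold Hor at h
  ext i; fin_cases i <;> simp [hmul, lin]
  rw [h]; ring

lemma out4 {E : Set (Fin 4 → ℝ)} (hE : HRConvex E) {A Q : Fin 4 → ℝ} (hA : A ∈ E) (hQ : Q ∉ E)
    (h : Hor A Q) {m : ℝ} (hm : 1 ≤ m) : lin A Q m ∉ E := by
  intro hX
  apply hQ
  have h2 : Hor A (lin A Q m) := by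
    have := h.lin 0 m
    rwa [lin_zero] at this
  have := conv4 hE hA hX h2 (l := 1 / m) (by positivity) (by rw [div_le_one (by linarith)]; exact hm)
  convert this using 1
  ext i
  have : m ≠ 0 := by linarith
  simp only [lin]; field_simp; ring

lemma lemA {E : Set (Fin 4 → ℝ)} (hE : HRConvex E) {R Q : Fin 4 → ℝ} (hR : R ∈ interior E)
    (hQ : Q ∉ interior E) (h : Hor R Q) (hne : Q 0 ≠ R 0 ∨ Q 1 ≠ R 1) {m : ℝ} (hm : 1 < m) :
    lin R Q m ∈ interior Eᶜ := by
  obtain ⟨s, rfl⟩ : ∃ s, m = 1 + s := ⟨m - 1, by ring⟩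
  have hs : 0 < s := by linarith
  let D : (Fin 4 → ℝ) × (Fin 4 → ℝ) → ℝ := fun z => (z.2 0 - z.1 0) ^ 2 + (z.2 1 - z.1 1) ^ 2
  let η : (Fin 4 → ℝ) × (Fin 4 → ℝ) → ℝ := fun z =>
    (z.2 3 - z.1 3 - 2 * (z.1 1 * z.2 0 - z.2 1 * z.1 0)) / (2 * D z)
  let Z : (Fin 4 → ℝ) × (Fin 4 → ℝ) → (Fin 4 → ℝ) := fun z =>
    ![z.1 0 + ((z.2 0 - z.1 0) / 2 - η z * (z.2 1 - z.1 1)),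
      z.1 1 + ((z.2 1 - z.1 1) / 2 + η z * (z.2 0 - z.1 0)),
      (z.1 2 + z.2 2) / 2,
      z.1 3 + 2 * (z.1 1 * ((z.2 0 - z.1 0) / 2 - η z * (z.2 1 - z.1 1)) -
        ((z.2 1 - z.1 1) / 2 + η z * (z.2 0 - z.1 0)) * z.1 0)]
  have hDpos : 0 < D (Q, lin R Q (1 + s)) := by
    have e0 : lin R Q (1 + s) 0 - Q 0 = s * (Q 0 - R 0) := by simp only [lin]; ring
    have e1 : lin R Q (1 + s) 1 - Q 1 = s * (Q 1 - R 1) := by simp only [lin]; ring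
    simp only [D, e0, e1]
    rcases hne with hh | hh
    · have : Q 0 - R 0 ≠ 0 := sub_ne_zero.2 hh
      positivity
    · have : Q 1 - R 1 ≠ 0 := sub_ne_zero.2 hh
      positivity
  have hDc : Continuous D := by fun_prop
  have hηc : ContinuousAt η (Q, lin R Q (1 + s)) := by
    apply ContinuousAt.div
    · fun_prop
    · fun_prop
    · positivity
  have hη0 : η (Q, lin R Q (1 + s)) = 0 := by
    simp only [η]
    rw [div_eq_zero_iff]; left
    unfold Hor at h
    simp only [lin]; rw [h]; ring
  have hZc : ContinuousAt Z (Q, lin R Q (1 + s)) := by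
    rw [continuousAt_pi]
    intro i
    fin_cases i <;> simp [Z] <;> fun_prop
  have hZ0 : Z (Q, lin R Q (1 + s)) = lin R Q (1 + s / 2) := by
    unfold Hor at h
    ext i
    fin_cases i <;> simp [Z, hη0, lin]
    · ring
    · ring
    · ring
    · rw [h]; ring
  let A1 : (Fin 4 → ℝ) × (Fin 4 → ℝ) → (Fin 4 → ℝ) := fun z => lin z.1 (Z z) (-(2 / s))
  let A2 : (Fin 4 → ℝ) × (Fin 4 → ℝ) → (Fin 4 → ℝ) := fun z => lin z.2 (Z z) (2 * (1 + s) / s)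
  have hA1c : ContinuousAt A1 (Q, lin R Q (1 + s)) := by
    rw [continuousAt_pi]
    intro i
    have := (continuousAt_pi.1 hZc) i
    simp only [A1, lin]; fun_prop
  have hA2c : ContinuousAt A2 (Q, lin R Q (1 + s)) := by
    rw [continuousAt_pi]
    intro i
    have := (continuousAt_pi.1 hZc) i
    simp only [A2, lin]; fun_prop
  have hA10 : A1 (Q, lin R Q (1 + s)) = R := by
    ext i
    simp only [A1, hZ0, lin]; field_simp; ring
  have hA20 : A2 (Q, lin R Q (1 + s)) = R := by
    ext i
    simp only [A2, hZ0, lin]; field_simp; ring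
  have hRn : E ∈ nhds R := mem_interior_iff_mem_nhds.1 hR
  have ev1 := hA1c.eventually_mem (by rw [hA10]; exact hRn)
  have ev2 := hA2c.eventually_mem (by rw [hA20]; exact hRn)
  have ev3 : ∀ᶠ z in nhds (Q, lin R Q (1 + s)), 0 < D z := hDc.continuousAt.eventually_const_lt hDpos
  have key : ∀ᶠ z in nhds (Q, lin R Q (1 + s)), z.1 ∉ E → z.2 ∉ E := by
    filter_upwards [ev1, ev2, ev3] with z z1 z2 z3 hz
    have hD' : D z ≠ 0 := z3.ne'
    have hη : 2 * D z * η z = z.2 3 - z.1 3 - 2 * (z.1 1 * z.2 0 - z.2 1 * z.1 0) := by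
      simp only [η]; field_simp
    have H1 : Hor z.1 (Z z) := by
      simp [Hor, Z]; ring
    have H2 : Hor (Z z) z.2 := by
      simp only [D] at hη
      simp [Hor, Z]; linear_combination -hη
    have hZ : Z z ∉ E := by
      have hH : Hor (A1 z) z.1 := by
        have := H1.lin (-(2 / s)) 0
        rwa [lin_zero] at this
      have := out4 hE z1 hz hH (m := 1 + s / 2) (by linarith)
      convert this using 2
      ext i
      simp only [A1, lin]; field_simp; ring
    have hH : Hor (A2 z) (Z z) := by
      have := H2.symm.lin (2 * (1 + s) / s) 1
      rwa [lin_one] at this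
    have := out4 hE z2 hZ hH (m := 2 * (1 + s) / (2 + s)) (by rw [le_div_iff₀ (by linarith)]; linarith)
    convert this using 2
    ext i
    simp only [A2, lin]; field_simp; ring
  rw [nhds_prod_eq] at key
  have key2 := key.curry
  have hfreq : ∃ᶠ q in nhds Q, q ∉ E := by
    intro hcon
    apply hQ
    rw [mem_interior_iff_mem_nhds]
    filter_upwards [hcon] with q hq
    simpa using hq
  obtain ⟨q, hq, hq2⟩ := (hfreq.and_eventually key2).exists
  rw [mem_interior_iff_mem_nhds]
  filter_upwards [hq2] with X hX
  exact hX hq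

lemma lemB_aux {C : Set (Fin 4 → ℝ)} (hC : HRConvex C) (hC' : HRConvex Cᶜ) {P Q : Fin 4 → ℝ}
    (hP : P ∉ interior C) (hQ : Q ∉ interior C) (hP' : P ∉ interior Cᶜ) (hQ' : Q ∉ interior Cᶜ)
    (h : Hor P Q) (hne : P 0 ≠ Q 0 ∨ P 1 ≠ Q 1) (l : ℝ) : lin P Q l ∉ interior C := by
  intro hX
  have hl0 : l ≠ 0 := by rintro rfl; rw [lin_zero] at hX; exact hP hX
  have hl1 : l ≠ 1 := by rintro rfl; rw [lin_one] at hX; exact hQ hX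
  have hl1' : l - 1 ≠ 0 := sub_ne_zero.2 hl1
  have HP : Hor (lin P Q l) P := by
    have := h.lin l 0; rwa [lin_zero] at this
  have HQ : Hor (lin P Q l) Q := by
    have := h.lin l 1; rwa [lin_one] at this
  have nP : P 0 ≠ lin P Q l 0 ∨ P 1 ≠ lin P Q l 1 := by
    refine hne.imp (fun hh he => ?_) (fun hh he => ?_)
    · simp only [lin] at he
      have : l * (Q 0 - P 0) = 0 := by linarith
      rcases mul_eq_zero.1 this with h1 | h1
      · exact hl0 h1
      · apply hh; linarith
    · simp only [lin] at he
      have : l * (Q 1 - P 1) = 0 := by linarith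
      rcases mul_eq_zero.1 this with h1 | h1
      · exact hl0 h1
      · apply hh; linarith
  have nQ : Q 0 ≠ lin P Q l 0 ∨ Q 1 ≠ lin P Q l 1 := by
    refine hne.imp (fun hh he => ?_) (fun hh he => ?_)
    · simp only [lin] at he
      have : (l - 1) * (Q 0 - P 0) = 0 := by linarith
      rcases mul_eq_zero.1 this with h1 | h1
      · exact hl1' h1
      · apply hh; linarith
    · simp only [lin] at he
      have : (l - 1) * (Q 1 - P 1) = 0 := by linarith
      rcases mul_eq_zero.1 this with h1 | h1
      · exact hl1' h1
      · apply hh; linarith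
  rcases lt_or_gt_of_ne hl0 with hlt | hgt
  · have := lemA hC hX hP HP nP (m := (1 - l) / (-l)) (by rw [lt_div_iff₀ (by linarith)]; linarith)
    apply hQ'
    convert this using 1
    ext i
    simp only [lin]; field_simp; ring
  · rcases lt_or_gt_of_ne hl1 with hlt1 | hgt1
    · have a1 := lemA hC hX hQ HQ nQ (m := 2) (by norm_num)
      have a2 := lemA hC hX hP HP nP (m := 2) (by norm_num)
      have hH : Hor (lin (lin P Q l) P 2) (lin (lin P Q l) Q 2) := by
        have := h.lin (-l) (2 - l)
        convert this using 1 <;> (ext i; simp only [lin]; ring)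
      have := conv4 hC' (interior_subset a2) (interior_subset a1) hH (l := l) hgt.le hlt1.le
      apply this
      convert interior_subset hX using 1
      ext i
      simp only [lin]; ring
    · have := lemA hC hX hQ HQ nQ (m := l / (l - 1)) (by rw [lt_div_iff₀ (by linarith)]; linarith)
      apply hP'
      convert this using 1
      ext i
      simp only [lin]; field_simp; ring

lemma mem_fr {E : Set (Fin 4 → ℝ)} {p : Fin 4 → ℝ} :
    p ∈ frontier E ↔ p ∉ interior E ∧ p ∉ interior Eᶜ := by
  rw [frontier, Set.mem_sdiff, interior_compl]
  simp [and_comm]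

lemma lemB_s15 {E : Set (Fin 4 → ℝ)} (hE : PreciselyMonotone E) {P Q : Fin 4 → ℝ}
    (hP : P ∈ frontier E) (hQ : Q ∈ frontier E)
    (h : Hor P Q) (hne : P 0 ≠ Q 0 ∨ P 1 ≠ Q 1) (l : ℝ) : lin P Q l ∈ frontier E := by
  rw [mem_fr] at *
  refine ⟨lemB_aux hE.1 hE.2 hP.1 hQ.1 hP.2 hQ.2 h hne l, ?_⟩
  refine lemB_aux hE.2 (by rw [compl_compl]; exact hE.1) hP.2 hQ.2 ?_ ?_ h hne l
  · rw [compl_compl]; exact hP.1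
  · rw [compl_compl]; exact hQ.1

def slice (E : Set (Fin 4 → ℝ)) (c : ℝ) : Set (ℝ × ℝ × ℝ) := {p | ![p.1, p.2.1, c, p.2.2] ∈ E}

lemma slice_H3 {E : Set (Fin 4 → ℝ)} (hE : HRConvex E) (c : ℝ) : H3 (slice E c) := by
  intro x y t x' y' t' l h1 h2 h3 hl hl1
  have := conv4 hE (p := ![x, y, c, t]) (q := ![x', y', c, t']) h1 h2 (by simp [Hor, h3]) hl hl1
  simp only [slice, Set.mem_ofPred_eq]
  convert this using 1
  ext i
  fin_cases i <;> simp [lin]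

lemma slab {E : Set (Fin 4 → ℝ)} (hE : HRConvex E) {B : Set (ℝ × ℝ × ℝ)} (hB : IsOpen B)
    (hBn : B.Nonempty) {c c' : ℝ} (hc : c < c') (h1 : B ⊆ slice E c) (h2 : B ⊆ slice E c') :
    (interior E).Nonempty := by
  obtain ⟨⟨x, y, t⟩, hp⟩ := hBn
  refine ⟨![x, y, (c + c') / 2, t], mem_interior.2
    ⟨{v | (v 0, v 1, v 3) ∈ B ∧ c < v 2 ∧ v 2 < c'}, ?_, ?_, ?_⟩⟩
  · rintro v ⟨hv, hv1, hv2⟩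
    have := conv4 hE (h1 hv) (h2 hv) (by simp [Hor]; ring) (l := (v 2 - c) / (c' - c))
      (by apply div_nonneg <;> linarith) (by rw [div_le_one (by linarith)]; linarith)
    convert this using 1
    have : c' - c ≠ 0 := by linarith
    ext i
    fin_cases i <;> simp [lin]
    field_simp; ring
  · refine IsOpen.and ?_ (IsOpen.and (isOpen_lt (by fun_prop) (by fun_prop)) (isOpen_lt (by fun_prop) (by fun_prop)))
    exact hB.preimage (f := fun v : Fin 4 → ℝ => (v 0, v 1, v 3)) (by fun_prop)
  · refine ⟨by simpa using hp, ?_, ?_⟩ <;> simp <;> linarith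

lemma slab' {E : Set (Fin 4 → ℝ)} (hE : HRConvex E) {B : Set (ℝ × ℝ × ℝ)} (hB : IsOpen B)
    (hBn : B.Nonempty) {c c' : ℝ} (hc : c ≠ c') (h1 : B ⊆ slice E c) (h2 : B ⊆ slice E c') :
    (interior E).Nonempty := by
  rcases lt_or_gt_of_ne hc with h | h
  · exact slab hE hB hBn h h1 h2
  · exact slab hE hB hBn h h2 h1

lemma int4 {E : Set (Fin 4 → ℝ)} (hE : PreciselyMonotone E) :
    (interior E).Nonempty ∨ (interior Eᶜ).Nonempty := by
  have hsl : ∀ c : ℝ, ∃ z : (TopologicalSpace.countableBasis (ℝ × ℝ × ℝ)) × Bool,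
      (z.1 : Set (ℝ × ℝ × ℝ)).Nonempty ∧
      (z.2 = true → (z.1 : Set (ℝ × ℝ × ℝ)) ⊆ slice E c) ∧
      (z.2 = false → (z.1 : Set (ℝ × ℝ × ℝ)) ⊆ slice Eᶜ c) := by
    intro c
    have hs1 : H3 (slice E c) := slice_H3 hE.1 c
    have hs2 : H3 (slice Eᶜ c) := slice_H3 hE.2 c
    have hcc : slice Eᶜ c = (slice E c)ᶜ := rfl
    rcases (slice E c).eq_empty_or_nonempty with he | hne
    · have hne : (slice Eᶜ c).Nonempty := by rw [hcc, he]; simp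
      obtain ⟨p, hp⟩ := core_int hs2 (by rw [hcc, compl_compl]; exact hs1) hne
      obtain ⟨B, hB, hpB, hBs⟩ :=
        (TopologicalSpace.isBasis_countableBasis (ℝ × ℝ × ℝ)).exists_subset_of_mem_open hp isOpen_interior
      exact ⟨(⟨B, hB⟩, false), ⟨p, hpB⟩, by simp, fun _ => hBs.trans interior_subset⟩
    · obtain ⟨p, hp⟩ := core_int hs1 hs2 hne
      obtain ⟨B, hB, hpB, hBs⟩ :=
        (TopologicalSpace.isBasis_countableBasis (ℝ × ℝ × ℝ)).exists_subset_of_mem_open hp isOpen_interior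
      exact ⟨(⟨B, hB⟩, true), ⟨p, hpB⟩, fun _ => hBs.trans interior_subset, by simp⟩
  choose f hf using hsl
  have hninj : ¬ Function.Injective f := by
    intro hi
    have : Countable (TopologicalSpace.countableBasis (ℝ × ℝ × ℝ)) :=
      (TopologicalSpace.countable_countableBasis (ℝ × ℝ × ℝ)).to_subtype
    have : Countable ℝ := hi.countable
    exact not_countable this
  simp only [Function.Injective] at hninj
  push Not at hninj
  obtain ⟨c, c', hcc, hne⟩ := hninj
  have hB : IsOpen ((f c).1 : Set (ℝ × ℝ × ℝ)) :=
    TopologicalSpace.isOpen_of_mem_countableBasis (f c).1.2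
  have h1 := hf c
  have h2 := hf c'
  rw [← hcc] at h2
  cases hb : (f c).2 with
  | true => exact Or.inl (slab' hE.1 hB h1.1 hne (h1.2.1 hb) (h2.2.1 hb))
  | false => exact Or.inr (slab' hE.2 hB h1.1 hne (h1.2.2 hb) (h2.2.2 hb))

lemma zero_plane {E : Set (Fin 4 → ℝ)} (hE : PreciselyMonotone E)
    (hz : (![0, 0, 1, 0] : Fin 4 → ℝ) ∈ frontier E)
    (hab : ∀ a b : ℝ, (![a, b, 0, 0] : Fin 4 → ℝ) ∈ frontier E) (x y u : ℝ) :
    (![x, y, u, 0] : Fin 4 → ℝ) ∈ frontier E := by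
  have good : ∀ x y u : ℝ, u ≠ 1 → (x ≠ 0 ∨ y ≠ 0) → (![x, y, u, 0] : Fin 4 → ℝ) ∈ frontier E := by
    intro x y u hu hxy
    have hs : 1 - u ≠ 0 := sub_ne_zero.2 hu.symm
    have := lemB_s15 hE hz (hab (x / (1 - u)) (y / (1 - u))) (by simp [Hor])
      (hxy.imp (fun h => (div_ne_zero h hs).symm) (fun h => (div_ne_zero h hs).symm)) (1 - u)
    convert this using 1
    ext i
    fin_cases i <;> simp [lin] <;> field_simp
  by_cases hxy : x ≠ 0 ∨ y ≠ 0
  · by_cases hu : u = 1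
    · subst hu
      have := lemB_s15 hE (good (3 * x) (3 * y) 0 (by norm_num) (by simpa using hxy))
        (good (-x) (-y) 2 (by norm_num) (by simpa using hxy)) (by simp [Hor]; ring) (by
          refine hxy.imp (fun h h' => h ?_) (fun h h' => h ?_) <;> simp at h' <;> linarith) (1 / 2)
      convert this using 1
      ext i
      fin_cases i <;> simp [lin] <;> ring
    · exact good x y u hu hxy
  · push Not at hxy
    obtain ⟨rfl, rfl⟩ := hxy
    have k1 := le_abs_self (u - 1)
    have k2 := neg_abs_le (u - 1)
    have := lemB_s15 hE (good 1 0 (u + (|u - 1| + 1)) (by intro h; linarith) (by simp))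
        (good (-1) 0 (u - (|u - 1| + 1)) (by intro h; linarith) (by simp)) (by simp [Hor]) (by
          left; simp; norm_num) (1 / 2)
    convert this using 1
    ext i
    fin_cases i <;> simp [lin] <;> ring

lemma off_axis {E : Set (Fin 4 → ℝ)} (hE : PreciselyMonotone E) {Q : Fin 4 → ℝ}
    (hQ : Q ∈ frontier E) (hQ0 : Q 0 = 0) (hQ1 : Q 1 = 0) :
    ∃ a b : ℝ, (a ≠ 0 ∨ b ≠ 0) ∧ (![a, b, Q 2, Q 3] : Fin 4 → ℝ) ∈ frontier E := by
  by_contra hcon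
  push Not at hcon
  let φ : ℂ → Fin 4 → ℝ := fun z => ![z.re, z.im, Q 2, Q 3]
  have hφ : Continuous φ := by
    refine continuous_pi fun i => ?_
    fin_cases i <;> simp [φ] <;> fun_prop
  have hcov : ∀ z ∈ ({0}ᶜ : Set ℂ), φ z ∈ interior E ∪ interior Eᶜ := by
    intro z hz
    have h0 : z.re ≠ 0 ∨ z.im ≠ 0 := by
      by_contra hc
      push Not at hc
      exact hz (Complex.ext hc.1 hc.2)
    have := hcon z.re z.im h0
    rw [mem_fr] at this
    by_contra hc
    rw [Set.mem_union] at hc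
    push Not at hc
    exact this hc
  have hpc : IsPreconnected ({0}ᶜ : Set ℂ) :=
    (isConnected_compl_singleton_of_one_lt_rank (by simp [Complex.rank_real_complex]) 0).isPreconnected
  have himg := hpc.image φ hφ.continuousOn
  have hsub : φ '' {0}ᶜ ⊆ interior E ∪ interior Eᶜ := by
    rintro _ ⟨z, hz, rfl⟩; exact hcov z hz
  have hdisj : ∀ p, p ∈ interior E → p ∈ interior Eᶜ → False := fun p h1 h2 =>
    (interior_subset h2) (interior_subset h1)
  have hfr := mem_fr.1 hQ
  have hHor : Hor (φ 1) Q := by simp [Hor, φ, hQ0, hQ1]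
  have hneg : φ (-1) = lin (φ 1) Q 2 := by
    ext i
    fin_cases i <;> simp [φ, lin, hQ0, hQ1] <;> norm_num
  have m1 : (1 : ℂ) ∈ ({0}ᶜ : Set ℂ) := by simp
  have m2 : (-1 : ℂ) ∈ ({0}ᶜ : Set ℂ) := by simp
  have hne : Q 0 ≠ φ 1 0 ∨ Q 1 ≠ φ 1 1 := by left; simp [φ, hQ0]
  have : (φ '' {0}ᶜ ∩ interior E).Nonempty ∧ (φ '' {0}ᶜ ∩ interior Eᶜ).Nonempty := by
    rcases hcov 1 m1 with h | h
    · refine ⟨⟨_, ⟨1, m1, rfl⟩, h⟩, ⟨_, ⟨-1, m2, rfl⟩, ?_⟩⟩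
      rw [hneg]
      exact lemA hE.1 h hfr.1 hHor hne (by norm_num)
    · refine ⟨⟨_, ⟨-1, m2, rfl⟩, ?_⟩, ⟨_, ⟨1, m1, rfl⟩, h⟩⟩
      rw [hneg]
      have := lemA hE.2 h hfr.2 hHor hne (m := 2) (by norm_num)
      rwa [compl_compl] at this
  obtain ⟨p, -, hp1, hp2⟩ := himg _ _ isOpen_interior isOpen_interior hsub this.1 this.2
  exact hdisj p hp1 hp2

lemma horQ {E : Set (Fin 4 → ℝ)} (hE : PreciselyMonotone E)
    (hpl : ∀ x y u : ℝ, (![x, y, u, 0] : Fin 4 → ℝ) ∈ frontier E) {Q W : Fin 4 → ℝ}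
    (hQ : Q ∈ frontier E) (hQ3 : Q 3 ≠ 0) (h : Hor Q W) (hW : Q 1 * W 0 - Q 0 * W 1 ≠ 0) :
    W ∈ frontier E := by
  have hd : W 3 - Q 3 ≠ 0 := by
    unfold Hor at h
    rw [h]; intro h'; apply hW; linarith
  obtain ⟨s, hs⟩ : ∃ s, s = -Q 3 / (W 3 - Q 3) := ⟨_, rfl⟩
  have hs0 : s ≠ 0 := by rw [hs]; exact div_ne_zero (neg_ne_zero.2 hQ3) hd
  have hT : lin Q W s ∈ frontier E := by
    convert hpl (lin Q W s 0) (lin Q W s 1) (lin Q W s 2) using 1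
    ext i
    fin_cases i <;> simp
    simp only [lin, hs]; field_simp; ring
  have hH : Hor Q (lin Q W s) := by
    have := h.lin 0 s; rwa [lin_zero] at this
  have hne : Q 0 ≠ lin Q W s 0 ∨ Q 1 ≠ lin Q W s 1 := by
    by_contra hc
    push Not at hc
    simp only [lin] at hc
    have e0 : s * (W 0 - Q 0) = 0 := by linarith [hc.1]
    have e1 : s * (W 1 - Q 1) = 0 := by linarith [hc.2]
    have f0 := (mul_eq_zero.1 e0).resolve_left hs0
    have f1 := (mul_eq_zero.1 e1).resolve_left hs0
    apply hW
    rw [sub_eq_zero.1 f0, sub_eq_zero.1 f1]; ring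
  have := lemB_s15 hE hQ hT hH hne (1 / s)
  convert this using 1
  ext i
  simp only [lin]; field_simp; ring

lemma two_planes {E : Set (Fin 4 → ℝ)} (hE : PreciselyMonotone E)
    (hpl : ∀ x y u : ℝ, (![x, y, u, 0] : Fin 4 → ℝ) ∈ frontier E) {Q Z : Fin 4 → ℝ}
    (hQ : Q ∈ frontier E) (hQ3 : Q 3 ≠ 0) (hZ3 : Z 3 ≠ 0)
    (hK0 : Q 1 * Z 0 - Q 0 * Z 1 ≠ 0) : Z ∈ frontier E := by
  obtain ⟨K, hK⟩ : ∃ K, K = Q 1 * Z 0 - Q 0 * Z 1 := ⟨_, rfl⟩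
  rw [← hK] at hK0
  obtain ⟨N, hN⟩ : ∃ N, N = Q 3 + 2 * K - Z 3 := ⟨_, rfl⟩
  obtain ⟨d, hd1, hd2, hd3⟩ : ∃ d : ℝ, 1 - d ≠ 0 ∧ Z 3 * (1 - d) + N ≠ 0 ∧
      2 * K * (1 - d) + N * d ≠ 0 := by
    by_contra hc
    push Not at hc
    have c0 : Z 3 * (1 - 0) + N = 0 := by
      by_contra h
      have := hc 0 (by norm_num) h
      apply hK0; linarith
    have c2 := hc 2 (by norm_num) (by intro h; apply hZ3; linarith)
    have c3 := hc 3 (by norm_num) (by intro h; apply hZ3; linarith)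
    apply hK0; linarith
  obtain ⟨a, ha⟩ : ∃ a, a = (-Q 0 + Z 0 * d) / K := ⟨_, rfl⟩
  obtain ⟨b, hb⟩ : ∃ b, b = (Z 1 * d - Q 1) / K := ⟨_, rfl⟩
  have e1 : Z 1 * a - Z 0 * b = 1 := by
    rw [ha, hb]; field_simp; rw [hK]; ring
  have e2 : Q 1 * a - Q 0 * b = d := by
    rw [ha, hb]; field_simp; rw [hK]; ring
  obtain ⟨s1, hs1⟩ : ∃ s, s = -Z 3 / 2 := ⟨_, rfl⟩
  obtain ⟨s2, hs2⟩ : ∃ s, s = N / (2 * (1 - d)) := ⟨_, rfl⟩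
  have hs2' : 2 * s2 * (1 - d) = N := by rw [hs2]; field_simp
  have hT := hpl (Z 0 + s1 * a) (Z 1 + s1 * b) (Z 2)
  have hW : (![Z 0 + s2 * a, Z 1 + s2 * b, Z 2, Z 3 + 2 * s2] : Fin 4 → ℝ) ∈ frontier E := by
    apply horQ hE hpl hQ hQ3
    · simp [Hor]
      linear_combination hs2' + hN - 2 * s2 * e2 + 2 * hK
    · simp
      intro h
      apply hd3
      have : K + s2 * d = 0 := by linear_combination h + hK - s2 * e2
      linear_combination 2 * (1 - d) * this - d * hs2'
  have hss : s2 - s1 ≠ 0 := by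
    intro h
    apply hd2
    rw [← hs2', sub_eq_zero.1 h, hs1]; ring
  have := lemB_s15 hE hT hW (by
      simp [Hor]
      linear_combination -2 * (s2 - s1) * e1 + 2 * hs1) (by
      by_contra hc
      push Not at hc
      simp at hc
      have a0 : (s2 - s1) * a = 0 := by
        rcases hc.1 with h | h
        · rw [h]; ring
        · rw [h]; ring
      have b0 : (s2 - s1) * b = 0 := by
        rcases hc.2 with h | h
        · rw [h]; ring
        · rw [h]; ring
      have a1 := (mul_eq_zero.1 a0).resolve_left hss
      have b1 := (mul_eq_zero.1 b0).resolve_left hss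
      rw [a1, b1] at e1
      norm_num at e1) (-s1 / (s2 - s1))
  convert this using 1
  ext i
  fin_cases i <;> simp [lin]
  · field_simp; ring
  · field_simp; ring
  · field_simp; rw [hs1]; ring

lemma generic {O : Set (Fin 4 → ℝ)} (hO : (interior O).Nonempty) (x y : ℝ) (hxy : x ≠ 0 ∨ y ≠ 0) :
    ∃ Z ∈ interior O, Z 3 ≠ 0 ∧ y * Z 0 - x * Z 1 ≠ 0 := by
  obtain ⟨Z, hZ⟩ := hO
  let γ : ℝ → Fin 4 → ℝ := fun e => ![Z 0 + e * y, Z 1 - e * x, Z 2, Z 3 + e]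
  have hγ : Continuous γ := by
    refine continuous_pi fun i => ?_
    fin_cases i <;> simp [γ] <;> fun_prop
  have hγ0 : γ 0 = Z := by
    ext i
    fin_cases i <;> simp [γ]
  have hpos : 0 < x ^ 2 + y ^ 2 := by
    rcases hxy with h | h <;> positivity
  have hn : γ ⁻¹' interior O ∈ nhds (0 : ℝ) :=
    (isOpen_interior.preimage hγ).mem_nhds (by rw [Set.mem_preimage, hγ0]; exact hZ)
  have hinf := infinite_of_mem_nhds (0 : ℝ) hn
  obtain ⟨e, he, he'⟩ := (hinf.sdiff (Set.toFinite
    {-Z 3, -(y * Z 0 - x * Z 1) / (x ^ 2 + y ^ 2)})).nonempty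
  refine ⟨γ e, he, fun h => he' ?_, fun h => he' ?_⟩
  · left; simp [γ] at h; linarith
  · right
    simp [γ] at h
    rw [Set.mem_singleton_iff, eq_div_iff hpos.ne']
    linarith

/-- Trichotomy at a boundary point (the origin) of a nontrivial precisely monotone
set in `ℍ×ℝ`. -/
theorem monotone_origin_trichotomy
    (E : Set (Fin 4 → ℝ)) (hE : PreciselyMonotone E)
    (h1 : E ≠ ∅) (h2 : E ≠ Set.univ)
    (h0 : (0 : Fin 4 → ℝ) ∈ frontier E) :
    frontier E = {v : Fin 4 → ℝ | v 3 = 0} ∨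
    (![0, 0, 1, 0] : Fin 4 → ℝ) ∈ interior E ∪ interior Eᶜ ∨
    ∃ a b : ℝ, (a, b) ≠ ((0 : ℝ), (0 : ℝ)) ∧
      (![a, b, 0, 0] : Fin 4 → ℝ) ∈ interior E ∪ interior Eᶜ := by

  by_cases hz : (![0, 0, 1, 0] : Fin 4 → ℝ) ∈ interior E ∪ interior Eᶜ
  · exact Or.inr (Or.inl hz)
  by_cases hab : ∃ a b : ℝ, (a, b) ≠ ((0 : ℝ), (0 : ℝ)) ∧
      (![a, b, 0, 0] : Fin 4 → ℝ) ∈ interior E ∪ interior Eᶜ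
  · exact Or.inr (Or.inr hab)
  left
  push Not at hab
  have hz' : (![0, 0, 1, 0] : Fin 4 → ℝ) ∈ frontier E := by
    rw [mem_fr]; rwa [Set.mem_union, not_or] at hz
  have hab' : ∀ a b : ℝ, (![a, b, 0, 0] : Fin 4 → ℝ) ∈ frontier E := by
    intro a b
    by_cases h : (a, b) = ((0 : ℝ), (0 : ℝ))
    · obtain ⟨rfl, rfl⟩ := Prod.mk.inj h
      convert h0 using 1
      ext i
      fin_cases i <;> simp
    · have := hab a b h
      rw [mem_fr]; rwa [Set.mem_union, not_or] at this
  have hpl := zero_plane hE hz' hab'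
  apply Set.Subset.antisymm
  · intro Q0 hQ0
    by_contra hQ3
    change ¬ (Q0 3 = 0) at hQ3
    obtain ⟨Q, hQ, hQ3, hxy⟩ : ∃ Q ∈ frontier E, Q 3 ≠ 0 ∧ (Q 0 ≠ 0 ∨ Q 1 ≠ 0) := by
      by_cases h : Q0 0 ≠ 0 ∨ Q0 1 ≠ 0
      · exact ⟨Q0, hQ0, hQ3, h⟩
      · push Not at h
        obtain ⟨a, b, hne, hfr⟩ := off_axis hE hQ0 h.1 h.2
        exact ⟨_, hfr, by simpa using hQ3, by simpa using hne⟩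
    rcases int4 hE with hI | hI
    · obtain ⟨Z, hZ, hZ3, hK⟩ := generic hI _ _ hxy
      exact (mem_fr.1 (two_planes hE hpl hQ hQ3 hZ3 hK)).1 hZ
    · obtain ⟨Z, hZ, hZ3, hK⟩ := generic hI _ _ hxy
      exact (mem_fr.1 (two_planes hE hpl hQ hQ3 hZ3 hK)).2 hZ
  · intro v hv
    change v 3 = 0 at hv
    convert hpl (v 0) (v 1) (v 2) using 1
    ext i
    fin_cases i <;> simp [hv]
end
end
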